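/- arXiv:1604.02814 — 3 statements merged into one kernel-verified Lean document; each statement's English description precedes it below -/
import Mathlib

section
/- Let d ≥ 1 be an integer, let r = p^e be a power of a prime p with integer e ≥ 0, and set N = (r−1)(2d+2). Let the vertex set of Δ_N be partitioned into d+1 color classes, each of cardinality at most 2r−1. Then for every continuous map f: Δ_N → ℝ^d there exist r pairwise disjoint rainbow faces σ_1, …, σ_r of Δ_N such that f(σ_1) ∩ ⋯ ∩ f(σ_r) ≠ ∅. (The topological weak colored Tverberg theorem; the case m = 0 of the topological transversal weak colored Tverberg theorem.) -/
/-!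
The vertices of the `r = p ^ e` faces sought are distributed over the group `G = (ℤ/p)^e`: a point
of the join of copies of `G`, one for each vertex of the simplex, is a weighted choice of pairwise
disjoint faces together with a point in each of them. Color classes are encoded by further test
functions `∑ x a * x b`, over pairs of distinct vertices of the same color. They vanish on rainbow
faces; conversely, `r` disjoint faces cannot all have two vertices in a class of at most `2r - 1`
vertices, so if a test function takes the same value at all `r` points, then this value is `0`.

It remains to find a point of the join at which given functions agree on all `r` faces, i.e. at
which their Fourier coefficients at nontrivial characters `χ` of `G` vanish. Such a coefficient is
a map to `ℂ` on which `G` acts by `χ`. Where it has no zero, its argument has a winding number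
cocycle, and if finitely many coefficients have no common zero, then on small simplices the cup
product of their winding cocycles vanishes. On the other hand, this cup product is evaluated on the
image of a free resolution of `ℤ` over `ℤ[G]`, the tensor product of the periodic resolutions of the
cyclic factors of `G`: modulo `p` it is the product of the linear forms given by the weights of the
characters, which is a nonzero polynomial.
-/

open scoped BigOperators

noncomputable section

/-- The standard `N`-dimensional simplex, realized in Euclidean space `ℝ^{N+1}`. -/
def stdSimp (N : ℕ) : Set (EuclideanSpace ℝ (Fin (N + 1))) :=
  {x | (∀ i, 0 ≤ x i) ∧ ∑ i, x i = 1}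

/-- The face of the standard simplex spanned by the vertex set `S`. -/
def simpFace (N : ℕ) (S : Finset (Fin (N + 1))) : Set (EuclideanSpace ℝ (Fin (N + 1))) :=
  {x ∈ stdSimp N | ∀ i, x i ≠ 0 → i ∈ S}

namespace TopologicalTverberg

section Resolution

variable {e : ℕ} {M N : Type*} [AddCommGroup M] [AddCommGroup N]

lemma sum_sub_single (μ : Fin e → ℤ) (i : Fin e) (z : ℤ) :
    ∑ l, (μ - Pi.single i z : Fin e → ℤ) l = ∑ l, μ l - z := by
  simp [Finset.sum_sub_distrib]

lemma exists_neg_of_sum_eq_zero {μ : Fin e → ℤ} (hμ : μ ≠ 0) (hsum : ∑ i, μ i = 0) :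
    ∃ i, μ i < 0 := by
  by_contra! hnonneg
  exact hμ (funext fun i =>
    (Finset.sum_eq_zero_iff_of_nonneg fun i _ => hnonneg i).1 hsum i (Finset.mem_univ i))

@[elab_as_elim]
lemma multidegree_induction {P : (Fin e → ℤ) → Prop} (neg : ∀ μ, ∑ i, μ i < 0 → P μ)
    (step : ∀ μ, 0 ≤ ∑ i, μ i → (∀ i, P (μ - Pi.single i 1)) → P μ) (μ : Fin e → ℤ) : P μ := by
  have bounded : ∀ n : ℕ, ∀ μ : Fin e → ℤ, ∑ i, μ i < n → P μ := by
    intro n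
    induction n with
    | zero => exact fun μ hμ => neg μ (mod_cast hμ)
    | succ n ih =>
      intro μ hμ
      rcases lt_or_ge (∑ i, μ i) 0 with hneg | hnonneg
      · exact neg μ hneg
      · refine step μ hnonneg fun i => ih _ ?_
        rw [sum_sub_single]
        omega
  exact bounded ((∑ i, μ i) + 1).toNat μ (by omega)

/-- The Koszul sign of moving a differential of degree one past the tensor factors `l < i`, in
multidegree `μ`. -/
def koszulSign (i : Fin e) (μ : Fin e → ℤ) : ℤ :=
  ((∑ l ∈ Finset.Iio i, μ l).negOnePow : ℤˣ)

lemma koszulSign_single (i : Fin e) (z : ℤ) : koszulSign i (Pi.single i z) = 1 := by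
  have : ∑ l ∈ Finset.Iio i, (Pi.single i z : Fin e → ℤ) l = 0 :=
    Finset.sum_eq_zero fun l hl => by simp [(Finset.mem_Iio.1 hl).ne]
  simp [koszulSign, this]

lemma koszulSign_sub_single_one (i j : Fin e) (μ : Fin e → ℤ) :
    koszulSign j (μ - Pi.single i 1) = if i < j then -koszulSign j μ else koszulSign j μ := by
  have : ∑ l ∈ Finset.Iio j, (μ - Pi.single i 1 : Fin e → ℤ) l =
      ∑ l ∈ Finset.Iio j, μ l - if i < j then 1 else 0 := by
    simp [Finset.sum_sub_distrib, Pi.single_apply]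
  rw [koszulSign, this]
  split_ifs <;> simp [koszulSign, Int.negOnePow_sub]

lemma koszulSign_sub_single_two (i j : Fin e) (μ : Fin e → ℤ) :
    koszulSign j (μ - Pi.single i 2) = koszulSign j μ := by
  have : μ - Pi.single i 2 = μ - Pi.single i 1 - Pi.single i 1 := by
    rw [sub_sub, ← Pi.single_add, one_add_one_eq_two]
  rw [this, koszulSign_sub_single_one, koszulSign_sub_single_one]
  split_ifs <;> simp

/-- The differential in degree `n` of the periodic resolution of `ℤ` over `ℤ[t] / (t ^ p - 1)`: the
norm element in even degrees and `t - 1` in odd degrees. -/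
def periodicDifferential {R : Type*} [Ring R] (p : ℕ) (t : R) (n : ℤ) : R :=
  if Even n then ∑ j ∈ Finset.range p, t ^ j else t - 1

lemma periodicDifferential_mul_pred {R : Type*} [Ring R] {p : ℕ} {t : R} (ht : t ^ p = 1) (n : ℤ) :
    periodicDifferential p t n * periodicDifferential p t (n - 1) = 0 := by
  rcases Int.even_or_odd n with hn | hn
  · have hn' : ¬Even (n - 1) := Int.not_even_iff_odd.2 (hn.sub_odd odd_one)
    simp only [periodicDifferential, if_pos hn, if_neg hn', geom_sum_mul, ht, sub_self]
  · have hn' : Even (n - 1) := hn.sub_odd odd_one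
    simp only [periodicDifferential, if_neg (Int.not_even_iff_odd.2 hn), if_pos hn', mul_geom_sum,
      ht, sub_self]

lemma commute_periodicDifferential {R : Type*} [Ring R] {t u : R} (h : Commute t u) (p : ℕ)
    (m n : ℤ) : Commute (periodicDifferential p t m) (periodicDifferential p u n) := by
  have left : ∀ {t u : R}, Commute t u → ∀ n, Commute (periodicDifferential p t n) u := by
    intro t u h n
    unfold periodicDifferential
    split_ifs
    · exact Commute.sum_left _ _ _ fun j _ => h.pow_left j
    · exact h.sub_left (Commute.one_left u)
  exact left (left h.symm n).symm m

lemma map_periodicDifferential (φ : M →ₗ[ℤ] N) {t : Module.End ℤ M} {u : Module.End ℤ N}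
    (h : ∀ x, φ (t x) = u (φ x)) (p : ℕ) (n : ℤ) (x : M) :
    φ (periodicDifferential p t n x) = periodicDifferential p u n (φ x) := by
  have map_pow : ∀ (k : ℕ) x, φ ((t ^ k) x) = (u ^ k) (φ x) := by
    intro k
    induction k with
    | zero => simp
    | succ k ih => intro x; simp [pow_succ, ih, h]
  unfold periodicDifferential
  split_ifs <;> simp [map_pow, h, LinearMap.sum_apply]

lemma map_periodicDifferential_of_invariant (f : M →ₗ[ℤ] N) {t : Module.End ℤ M}
    (h : ∀ x, f (t x) = f x) (p : ℕ) (n : ℤ) (x : M) :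
    f (periodicDifferential p t n x) = if Even n then p • f x else 0 := by
  rw [map_periodicDifferential f (u := 1) h, periodicDifferential]
  split_ifs <;> simp

lemma periodicDifferential_mem {S : Submodule ℤ M} {t : Module.End ℤ M} (h : ∀ x ∈ S, t x ∈ S)
    (p : ℕ) (n : ℤ) {x : M} (hx : x ∈ S) : periodicDifferential p t n x ∈ S := by
  have pow_mem : ∀ k : ℕ, (t ^ k) x ∈ S := by
    intro k
    induction k with
    | zero => simpa using hx
    | succ k ih => rw [pow_succ']; exact h _ ih
  unfold periodicDifferential
  split_ifs
  · rw [LinearMap.sum_apply]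
    exact S.sum_mem fun k _ => pow_mem k
  · exact S.sub_mem (h x hx) hx

/-- The differential of the tensor product of `e` periodic resolutions, acting on families in `M`
indexed by multidegrees; the generator of the `i`-th factor acts on `M` by `τ i`. -/
def tensorDifferential (p : ℕ) (τ : Fin e → Module.End ℤ M) :
    ((Fin e → ℤ) → M) →ₗ[ℤ] ((Fin e → ℤ) → M) :=
  LinearMap.pi fun μ => ∑ i, koszulSign i μ •
    (periodicDifferential p (τ i) (μ i) ∘ₗ LinearMap.proj (μ - Pi.single i 1))

lemma tensorDifferential_apply (p : ℕ) (τ : Fin e → Module.End ℤ M) (c : (Fin e → ℤ) → M)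
    (μ : Fin e → ℤ) : tensorDifferential p τ c μ =
      ∑ i, koszulSign i μ • periodicDifferential p (τ i) (μ i) (c (μ - Pi.single i 1)) := by
  simp [tensorDifferential, LinearMap.sum_apply]

lemma tensorDifferential_congr (p : ℕ) (τ : Fin e → Module.End ℤ M) {c c' : (Fin e → ℤ) → M}
    {μ : Fin e → ℤ} (h : ∀ i, c (μ - Pi.single i 1) = c' (μ - Pi.single i 1)) :
    tensorDifferential p τ c μ = tensorDifferential p τ c' μ := by
  simp only [tensorDifferential_apply, h]

lemma tensorDifferential_eq_zero (p : ℕ) (τ : Fin e → Module.End ℤ M) {c : (Fin e → ℤ) → M}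
    {μ : Fin e → ℤ} (h : ∀ i, c (μ - Pi.single i 1) = 0) : tensorDifferential p τ c μ = 0 := by
  simp [tensorDifferential_apply, h]

lemma tensorDifferential_eq_zero_of_sum_neg (p : ℕ) (τ : Fin e → Module.End ℤ M)
    {c : (Fin e → ℤ) → M} (hc : ∀ μ, ∑ i, μ i < 0 → c μ = 0) {μ : Fin e → ℤ}
    (hμ : ∑ i, μ i < 0) : tensorDifferential p τ c μ = 0 :=
  tensorDifferential_eq_zero p τ fun i => hc _ (by rw [sum_sub_single]; omega)

lemma tensorDifferential_mem {p : ℕ} {τ : Fin e → Module.End ℤ M} {S : Submodule ℤ M}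
    (hS : ∀ i, ∀ x ∈ S, τ i x ∈ S) {c : (Fin e → ℤ) → M} {μ : Fin e → ℤ}
    (hc : ∀ i, c (μ - Pi.single i 1) ∈ S) : tensorDifferential p τ c μ ∈ S := by
  rw [tensorDifferential_apply]
  exact S.sum_mem fun i _ => S.smul_mem _ (periodicDifferential_mem (hS i) p _ (hc i))

lemma map_tensorDifferential (φ : M →ₗ[ℤ] N) {τ : Fin e → Module.End ℤ M}
    {τ' : Fin e → Module.End ℤ N} (h : ∀ i x, φ (τ i x) = τ' i (φ x)) (p : ℕ)
    (c : (Fin e → ℤ) → M) (μ : Fin e → ℤ) :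
    φ (tensorDifferential p τ c μ) = tensorDifferential p τ' (φ ∘ c) μ := by
  simp [tensorDifferential_apply, map_periodicDifferential φ (h _)]

lemma dvd_map_tensorDifferential {p : ℕ} {τ : Fin e → Module.End ℤ M} (f : M →ₗ[ℤ] ℤ)
    (hf : ∀ i x, f (τ i x) = f x) (c : (Fin e → ℤ) → M) (μ : Fin e → ℤ) :
    (p : ℤ) ∣ f (tensorDifferential p τ c μ) := by
  simp only [tensorDifferential_apply, map_sum, map_smul,
    map_periodicDifferential_of_invariant f (hf _)]
  refine Finset.dvd_sum fun i _ => Dvd.dvd.mul_left ?_ _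
  split_ifs <;> simp

lemma tensorDifferential_translate_two (p : ℕ) (τ : Fin e → Module.End ℤ M)
    (c : (Fin e → ℤ) → M) (i : Fin e) (μ : Fin e → ℤ) :
    tensorDifferential p τ (fun ν => c (ν - Pi.single i 2)) μ =
      tensorDifferential p τ c (μ - Pi.single i 2) := by
  have even_iff : ∀ j, Even ((μ - Pi.single i 2 : Fin e → ℤ) j) ↔ Even (μ j) := by
    intro j
    by_cases hij : j = i
    · subst hij; simp
    · simp [hij]
  simp only [tensorDifferential_apply, koszulSign_sub_single_two, periodicDifferential, even_iff,
    sub_right_comm μ (Pi.single i 2)]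

theorem tensorDifferential_tensorDifferential {p : ℕ} {τ : Fin e → Module.End ℤ M}
    (hp : ∀ i, τ i ^ p = 1) (hτ : ∀ i j, Commute (τ i) (τ j)) (c : (Fin e → ℤ) → M) :
    tensorDifferential p τ (tensorDifferential p τ c) = 0 := by
  funext μ
  let term (i j : Fin e) : M := (koszulSign i μ * koszulSign j (μ - Pi.single i 1)) •
    (periodicDifferential p (τ i) (μ i) *
      periodicDifferential p (τ j) ((μ - Pi.single i 1 : Fin e → ℤ) j))
        (c (μ - Pi.single i 1 - Pi.single j 1))
  have sum_term : tensorDifferential p τ (tensorDifferential p τ c) μ = ∑ i, ∑ j, term i j := by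
    simp [term, tensorDifferential_apply, map_sum, Finset.smul_sum, smul_smul]
  have term_self (i) : term i i = 0 := by
    simp only [term, Pi.sub_apply, Pi.single_eq_same, periodicDifferential_mul_pred (hp i),
      LinearMap.zero_apply, smul_zero]
  have term_swap {i j} (hij : i < j) : term i j = -term j i := by
    simp only [term, koszulSign_sub_single_one, if_pos hij, if_neg hij.not_gt, Pi.sub_apply,
      Pi.single_eq_of_ne hij.ne', Pi.single_eq_of_ne hij.ne, sub_zero,
      (commute_periodicDifferential (hτ i j) p (μ i) (μ j)).eq,
      sub_right_comm μ (Pi.single i 1), mul_neg, neg_smul, mul_comm]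
  rw [sum_term, ← Finset.sum_product']
  refine Finset.sum_involution (fun x _ => x.swap) ?_ ?_ (by simp) (by simp)
  · rintro ⟨i, j⟩ -
    rcases lt_trichotomy i j with hij | rfl | hij
    · simp [term_swap hij]
    · simp [term_self]
    · simp [term_swap hij]
  · rintro ⟨i, j⟩ - hne heq
    obtain rfl : j = i := (Prod.mk.inj heq).1
    exact hne (term_self j)

lemma exists_eq_step_tensorDifferential (p : ℕ) (τ : Fin e → Module.End ℤ M)
    (step : (Fin e → ℤ) → M → M) (hstep : ∀ μ, ∑ i, μ i < 0 → step μ 0 = 0) :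
    ∃ h : (Fin e → ℤ) → M, (∀ μ, ∑ i, μ i < 0 → h μ = 0) ∧
      ∀ μ, h μ = step μ (tensorDifferential p τ h μ) := by
  let approx (n : ℕ) : (Fin e → ℤ) → M :=
    n.rec 0 fun _ h μ => step μ (tensorDifferential p τ h μ)
  let h (μ : Fin e → ℤ) : M := approx ((∑ i, μ i) + 1).toNat μ
  have h_neg : ∀ μ, ∑ i, μ i < 0 → h μ = 0 := by
    intro μ hμ
    have : ((∑ i, μ i) + 1).toNat = 0 := by omega
    simp only [h, this]
    rfl
  refine ⟨h, h_neg, fun μ => ?_⟩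
  rcases lt_or_ge (∑ i, μ i) 0 with hμ | hμ
  · rw [h_neg μ hμ, tensorDifferential_eq_zero_of_sum_neg p τ h_neg hμ, hstep μ hμ]
  · have : ((∑ i, μ i) + 1).toNat = (∑ i, μ i).toNat + 1 := by omega
    simp only [h, this]
    refine congrArg (step μ) (tensorDifferential_congr p τ fun i => ?_)
    rw [sum_sub_single, sub_add_cancel]

/-- Comparison of resolutions, relative to a submodule `S`: the contraction `κ` of `(M, ∂)` makes
every chain map of positive degree null-homotopic. -/
theorem exists_nullHomotopy {p : ℕ} {τ : Fin e → Module.End ℤ M} (hp : ∀ i, τ i ^ p = 1)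
    (hτ : ∀ i j, Commute (τ i) (τ j)) {bd κ : Module.End ℤ M}
    (hbd : ∀ i x, bd (τ i x) = τ i (bd x)) (hκ : ∀ x, bd (κ x) = x - κ (bd x))
    {S : Submodule ℤ M} (hSτ : ∀ i, ∀ x ∈ S, τ i x ∈ S) (hSκ : ∀ x ∈ S, κ x ∈ S)
    {a : (Fin e → ℤ) → M} (ha_neg : ∀ μ, ∑ i, μ i < 0 → a μ = 0)
    (ha : ∀ μ, bd (a μ) - tensorDifferential p τ a μ ∈ S) :
    ∃ h : (Fin e → ℤ) → M, ∀ μ, a μ - bd (h μ) - tensorDifferential p τ h μ ∈ S := by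
  obtain ⟨h, h_neg, h_eq⟩ := exists_eq_step_tensorDifferential p τ (fun μ x => κ (a μ - x))
    fun μ hμ => by simp [ha_neg μ hμ]
  let z := a - bd ∘ h - tensorDifferential p τ h
  have diff_z : tensorDifferential p τ z =
      tensorDifferential p τ a - tensorDifferential p τ (bd ∘ h) := by
    simp only [z, map_sub, tensorDifferential_tensorDifferential hp hτ, sub_zero]
  have z_eq (μ) :
      z μ = κ (tensorDifferential p τ z μ + (bd (a μ) - tensorDifferential p τ a μ)) := by
    have bd_h : bd (h μ) = a μ - tensorDifferential p τ h μ -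
        κ (bd (a μ) - tensorDifferential p τ (bd ∘ h) μ) := by
      rw [h_eq μ, hκ, map_sub bd, map_tensorDifferential bd hbd]
    simp only [diff_z, Pi.sub_apply, sub_add_sub_cancel', z, Function.comp_apply, bd_h]
    abel
  refine ⟨h, fun μ => show z μ ∈ S from ?_⟩
  induction μ using multidegree_induction with
  | neg μ hμ =>
    simp [z, ha_neg μ hμ, h_neg μ hμ, tensorDifferential_eq_zero_of_sum_neg p τ h_neg hμ]
  | step μ _ ih =>
    rw [z_eq]
    exact hSκ _ (S.add_mem (tensorDifferential_mem hSτ ih) (ha μ))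

end Resolution

section OrderedChain

variable {V W X A : Type*} [AddCommGroup A]

/-- Integral chains on ordered simplices, encoded as lists of vertices in which repetitions are
allowed. The empty list is included, as the simplex of dimension `-1` of the augmented complex. -/
abbrev OrderedChain (V : Type*) := List V →₀ ℤ

lemma chainHom_ext {f g : OrderedChain V →ₗ[ℤ] A}
    (h : ∀ l, f (Finsupp.single l 1) = g (Finsupp.single l 1)) : f = g :=
  Finsupp.lhom_ext' fun l => LinearMap.ext_ring (h l)

lemma map_mem_of_mem_supported (f : OrderedChain V →ₗ[ℤ] A) {S : Submodule ℤ A}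
    {L : Set (List V)} (h : ∀ l ∈ L, f (Finsupp.single l 1) ∈ S) {x : OrderedChain V}
    (hx : x ∈ Finsupp.supported ℤ ℤ L) : f x ∈ S := by
  rw [Finsupp.supported_eq_span_single] at hx
  exact (Submodule.span_le (p := S.comap f)).2 (Set.image_subset_iff.2 h) hx

lemma map_eq_zero_of_mem_supported (f : OrderedChain V →ₗ[ℤ] A) {L : Set (List V)}
    (h : ∀ l ∈ L, f (Finsupp.single l 1) = 0) {x : OrderedChain V}
    (hx : x ∈ Finsupp.supported ℤ ℤ L) : f x = 0 :=
  (Submodule.mem_bot ℤ).1 (map_mem_of_mem_supported f (fun l hl => by simp [h l hl]) hx)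

/-- The simplex of dimension `-1`. -/
def emptySimplex : OrderedChain V := Finsupp.single [] 1

/-- The cone operator, prepending the vertex `v` to every simplex. -/
def cone (v : V) : Module.End ℤ (OrderedChain V) := Finsupp.lmapDomain ℤ ℤ (List.cons v)

/-- The chain map induced by a map of vertices. -/
def push (φ : V → W) : OrderedChain V →ₗ[ℤ] OrderedChain W :=
  Finsupp.lmapDomain ℤ ℤ (List.map φ)

/-- The augmented boundary of a simplex, `∂(v * l) = l - v * ∂l`. -/
def simplexBoundary : List V → OrderedChain V
  | [] => 0
  | v :: l => Finsupp.single l 1 - cone v (simplexBoundary l)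

/-- The boundary operator of the augmented ordered chain complex. -/
def boundary : Module.End ℤ (OrderedChain V) := Finsupp.linearCombination ℤ simplexBoundary

@[simp] lemma cone_single (v : V) (l : List V) (n : ℤ) :
    cone v (Finsupp.single l n) = Finsupp.single (v :: l) n := by
  simp [cone]

@[simp] lemma push_single (φ : V → W) (l : List V) (n : ℤ) :
    push φ (Finsupp.single l n) = Finsupp.single (l.map φ) n := by
  simp [push]

@[simp] lemma push_emptySimplex (φ : V → W) : push φ emptySimplex = emptySimplex := by
  simp [emptySimplex]

lemma push_id (x : OrderedChain V) : push id x = x :=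
  LinearMap.congr_fun (f := push id) (g := LinearMap.id) (chainHom_ext fun l => by simp) x

lemma push_push (ψ : W → X) (φ : V → W) (x : OrderedChain V) :
    push ψ (push φ x) = push (ψ ∘ φ) x :=
  LinearMap.congr_fun (f := push ψ ∘ₗ push φ) (chainHom_ext fun l => by simp) x

lemma push_cone (φ : V → W) (v : V) (x : OrderedChain V) :
    push φ (cone v x) = cone (φ v) (push φ x) :=
  LinearMap.congr_fun (f := push φ ∘ₗ cone v) (g := cone (φ v) ∘ₗ push φ)
    (chainHom_ext fun l => by simp) x

lemma boundary_single (l : List V) : boundary (Finsupp.single l 1) = simplexBoundary l := by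
  simp [boundary]

@[simp] lemma boundary_emptySimplex : boundary (emptySimplex : OrderedChain V) = 0 :=
  boundary_single []

lemma boundary_cone (v : V) (x : OrderedChain V) :
    boundary (cone v x) = x - cone v (boundary x) :=
  LinearMap.congr_fun (f := boundary ∘ₗ cone v) (g := LinearMap.id - cone v ∘ₗ boundary)
    (chainHom_ext fun l => by simp [boundary_single, simplexBoundary]) x

lemma boundary_boundary (x : OrderedChain V) : boundary (boundary x) = 0 := by
  refine LinearMap.congr_fun (f := boundary ∘ₗ boundary) (g := 0) (chainHom_ext fun l => ?_) x
  induction l with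
  | nil => simp [boundary_single, simplexBoundary]
  | cons v l ih =>
    rw [LinearMap.comp_apply] at ih
    rw [← cone_single, LinearMap.comp_apply, boundary_cone, map_sub, boundary_cone, ih]
    simp

lemma boundary_push (φ : V → W) (x : OrderedChain V) :
    boundary (push φ x) = push φ (boundary x) := by
  refine LinearMap.congr_fun (f := boundary ∘ₗ push φ) (g := push φ ∘ₗ boundary)
    (chainHom_ext fun l => ?_) x
  simp only [LinearMap.comp_apply]
  induction l with
  | nil => simp [boundary_single, simplexBoundary]
  | cons v l ih => rw [← cone_single, push_cone, boundary_cone, ih, boundary_cone, map_sub,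
      push_cone]

/-- The `0`-cochain with value `f a` on the vertex `a`. -/
def vertexSum (f : V → A) : OrderedChain V →ₗ[ℤ] A :=
  Finsupp.linearCombination ℤ fun
    | [a] => f a
    | _ => 0

/-- The `1`-cochain with value `f a b` on the edge from `a` to `b`. -/
def edgeSum (f : V → V → A) : OrderedChain V →ₗ[ℤ] A :=
  Finsupp.linearCombination ℤ fun
    | [a, b] => f a b
    | _ => 0

/-- The sum of the coefficients of the vertices of a chain. -/
def augmentation : OrderedChain V →ₗ[ℤ] ℤ := vertexSum fun _ => 1

lemma vertexSum_single_of_length_ne (f : V → A) {l : List V} (h : l.length ≠ 1) :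
    vertexSum f (Finsupp.single l 1) = 0 := by
  match l with
  | [] => simp [vertexSum]
  | [_] => simp at h
  | _ :: _ :: _ => simp [vertexSum]

lemma edgeSum_single_of_length_ne (f : V → V → A) {l : List V} (h : l.length ≠ 2) :
    edgeSum f (Finsupp.single l 1) = 0 := by
  match l with
  | [] => simp [edgeSum]
  | [_] => simp [edgeSum]
  | [_, _] => simp at h
  | _ :: _ :: _ :: _ => simp [edgeSum]

@[simp] lemma vertexSum_emptySimplex (f : V → A) : vertexSum f emptySimplex = 0 :=
  vertexSum_single_of_length_ne f (by simp)

@[simp] lemma edgeSum_emptySimplex (f : V → V → A) : edgeSum f emptySimplex = 0 :=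
  edgeSum_single_of_length_ne f (by simp)

@[simp] lemma augmentation_emptySimplex : augmentation (emptySimplex : OrderedChain V) = 0 :=
  vertexSum_emptySimplex _

lemma vertexSum_cone_cone (f : V → A) (a b : V) (x : OrderedChain V) :
    vertexSum f (cone a (cone b x)) = 0 :=
  LinearMap.congr_fun (f := vertexSum f ∘ₗ cone a ∘ₗ cone b) (g := 0)
    (chainHom_ext fun l => by simp [vertexSum]) x

lemma edgeSum_cone_cone_cone (f : V → V → A) (a b c : V) (x : OrderedChain V) :
    edgeSum f (cone a (cone b (cone c x))) = 0 :=
  LinearMap.congr_fun (f := edgeSum f ∘ₗ cone a ∘ₗ cone b ∘ₗ cone c) (g := 0)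
    (chainHom_ext fun l => by simp [edgeSum]) x

lemma vertexSum_boundary (f : V → A) (x : OrderedChain V) :
    vertexSum f (boundary x) = edgeSum (fun a b => f b - f a) x := by
  refine LinearMap.congr_fun (f := vertexSum f ∘ₗ boundary) (chainHom_ext fun l => ?_) x
  match l with
  | [] => simp [boundary_single, simplexBoundary, edgeSum]
  | [_] => simp [boundary_single, simplexBoundary, edgeSum, vertexSum]
  | [_, _] => simp [boundary_single, simplexBoundary, edgeSum, vertexSum]
  | _ :: _ :: _ :: _ =>
    simp [boundary_single, simplexBoundary, edgeSum, map_sub, vertexSum_cone_cone,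
      vertexSum_single_of_length_ne]

lemma augmentation_boundary (x : OrderedChain V) : augmentation (boundary x) = 0 := by
  rw [augmentation, vertexSum_boundary]
  refine LinearMap.congr_fun (g := 0) (chainHom_ext fun l => ?_) x
  simp only [sub_self, edgeSum]
  match l with
  | [] | [_] | [_, _] | _ :: _ :: _ :: _ => simp

lemma boundary_apply_nil (x : OrderedChain V) : boundary x [] = augmentation x := by
  refine LinearMap.congr_fun (f := Finsupp.lapply [] ∘ₗ boundary) (chainHom_ext fun l => ?_) x
  have cone_apply_nil (v : V) (y : OrderedChain V) : cone v y [] = 0 :=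
    LinearMap.congr_fun (f := Finsupp.lapply [] ∘ₗ cone v) (g := 0)
      (chainHom_ext fun l => by simp) y
  match l with
  | [] | [_] | _ :: _ :: _ =>
    simp [boundary_single, simplexBoundary, augmentation, vertexSum, cone_apply_nil]

lemma vertexSum_push (f : W → A) (φ : V → W) (x : OrderedChain V) :
    vertexSum f (push φ x) = vertexSum (f ∘ φ) x := by
  refine LinearMap.congr_fun (f := vertexSum f ∘ₗ push φ) (chainHom_ext fun l => ?_) x
  match l with
  | [] | [_] | _ :: _ :: _ => simp [vertexSum]

lemma edgeSum_push (f : W → W → A) (φ : V → W) (x : OrderedChain V) :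
    edgeSum f (push φ x) = edgeSum (fun a b => f (φ a) (φ b)) x := by
  refine LinearMap.congr_fun (f := edgeSum f ∘ₗ push φ) (chainHom_ext fun l => ?_) x
  match l with
  | [] | [_] | [_, _] | _ :: _ :: _ :: _ => simp [edgeSum]

lemma augmentation_push (φ : V → W) (x : OrderedChain V) :
    augmentation (push φ x) = augmentation x :=
  vertexSum_push _ _ x

lemma vertexSum_add_const (f : V → A) (z : A) (x : OrderedChain V) :
    vertexSum (fun v => f v + z) x = vertexSum f x + augmentation x • z := by
  refine LinearMap.congr_fun (g := vertexSum f + augmentation.smulRight z)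
    (chainHom_ext fun l => ?_) x
  match l with
  | [] | [_] | _ :: _ :: _ => simp [vertexSum, augmentation]

end OrderedChain

section Winding

variable {V W : Type*} (s : V → Real.Angle)

/-- The angle swept along the shortest arc from `s a` to `s b`, in `(-π, π]`. -/
def signedAngle (a b : V) : ℝ := (s b - s a).toReal

/-- The number of turns made by the closed path of shortest arcs through `s a`, `s b` and `s c`:
a cocycle representing the Euler class of the circle action. -/
def winding (a b c : V) : ℤ :=
  round ((signedAngle s a b + signedAngle s b c - signedAngle s a c) / (2 * Real.pi))

lemma two_pi_mul_winding (a b c : V) : 2 * Real.pi * winding s a b c =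
    signedAngle s a b + signedAngle s b c - signedAngle s a c := by
  have coe_eq_zero :
      ((signedAngle s a b + signedAngle s b c - signedAngle s a c : ℝ) : Real.Angle) = 0 := by
    simp [signedAngle, -Real.Angle.coe_sub, Real.Angle.coe_add, Real.Angle.coe_sub]
  obtain ⟨n, hn⟩ := Real.Angle.coe_eq_zero_iff.1 coe_eq_zero
  rw [winding, ← hn, zsmul_eq_mul, mul_div_cancel_right₀ _ Real.two_pi_pos.ne', round_intCast,
    mul_comm]

lemma winding_cocycle (a b c d : V) :
    winding s b c d - winding s a c d + winding s a b d - winding s a b c = 0 := by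
  have : 2 * Real.pi *
      (winding s b c d - winding s a c d + winding s a b d - winding s a b c : ℤ) = 0 := by
    push_cast
    simp only [mul_add, mul_sub, two_pi_mul_winding]
    ring
  exact_mod_cast (mul_eq_zero.1 this).resolve_left Real.two_pi_pos.ne'

/-- The cap product with the winding cocycle on a simplex. -/
def simplexCap : List V → OrderedChain V
  | a :: b :: c :: l => Finsupp.single (c :: l) (winding s a b c)
  | _ => 0

/-- The cap product with the winding cocycle, evaluating it on front faces. -/
def capWinding : Module.End ℤ (OrderedChain V) := Finsupp.linearCombination ℤ (simplexCap s)

lemma capWinding_single (l : List V) : capWinding s (Finsupp.single l 1) = simplexCap s l := by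
  simp [capWinding]

@[simp] lemma capWinding_emptySimplex : capWinding s emptySimplex = 0 := capWinding_single s []

lemma capWinding_cone_cone_cone (a b c : V) (x : OrderedChain V) :
    capWinding s (cone a (cone b (cone c x))) = winding s a b c • cone c x :=
  LinearMap.congr_fun (f := capWinding s ∘ₗ cone a ∘ₗ cone b ∘ₗ cone c)
    (g := winding s a b c • cone c)
    (chainHom_ext fun l => by simp [capWinding_single, simplexCap]) x

lemma boundary_capWinding_cone (a b c d : V) (x : OrderedChain V) :
    boundary (capWinding s (cone a (cone b (cone c (cone d x))))) =
      capWinding s (boundary (cone a (cone b (cone c (cone d x))))) := by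
  have cocycle : winding s b c d - winding s a c d + winding s a b d = winding s a b c := by
    linarith [winding_cocycle s a b c d]
  calc
    _ = winding s a b c • cone d x - winding s a b c • cone c (x - cone d (boundary x)) := by
      rw [capWinding_cone_cone_cone, map_smul, boundary_cone, boundary_cone, smul_sub]
    _ = (winding s b c d - winding s a c d + winding s a b d) • cone d x -
          winding s a b c • cone c (x - cone d (boundary x)) := by
      rw [cocycle]
    _ = _ := by
      simp only [boundary_cone, map_sub, capWinding_cone_cone_cone, sub_smul, add_smul, smul_sub]
      abel

lemma boundary_capWinding (x : OrderedChain V) : boundary (capWinding s x) =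
    capWinding s (boundary x) + augmentation (capWinding s x) • emptySimplex := by
  refine LinearMap.congr_fun (f := boundary ∘ₗ capWinding s)
    (g := capWinding s ∘ₗ boundary + (augmentation ∘ₗ capWinding s).smulRight emptySimplex)
    (chainHom_ext fun l => ?_) x
  simp only [LinearMap.comp_apply, LinearMap.add_apply, LinearMap.smulRight_apply]
  match l with
  | [] | [_] | [_, _] => simp [boundary_single, capWinding_single, simplexBoundary, simplexCap]
  | [a, b, c] =>
    rw [capWinding_single, simplexCap, ← Finsupp.smul_single_one, map_smul, map_smul]
    simp [boundary_single, capWinding_single, simplexBoundary, simplexCap, augmentation, vertexSum,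
      emptySimplex]
  | a :: b :: c :: d :: l =>
    simp only [← cone_single]
    rw [boundary_capWinding_cone, capWinding_cone_cone_cone, map_smul, augmentation,
      vertexSum_cone_cone, smul_zero, zero_smul, add_zero]

lemma two_pi_mul_augmentation_capWinding (x : OrderedChain V) :
    2 * Real.pi * augmentation (capWinding s x) = edgeSum (signedAngle s) (boundary x) := by
  refine LinearMap.congr_fun
    (f := LinearMap.mulLeft ℤ (2 * Real.pi) ∘ₗ (Int.castAddHom ℝ).toIntLinearMap ∘ₗ
      augmentation ∘ₗ capWinding s)
    (g := edgeSum (signedAngle s) ∘ₗ boundary) (chainHom_ext fun l => ?_) x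
  match l with
  | [] | [_] | [_, _] =>
    simp [boundary_single, capWinding_single, simplexBoundary, simplexCap, edgeSum]
  | [a, b, c] =>
    calc
      _ = 2 * Real.pi * (winding s a b c : ℝ) := by
        simp [capWinding_single, simplexCap, augmentation, vertexSum, mul_assoc]
      _ = signedAngle s b c - (signedAngle s a c - signedAngle s a b) := by
        rw [two_pi_mul_winding]
        ring
      _ = _ := by simp [boundary_single, simplexBoundary, edgeSum]
  | a :: b :: c :: d :: l =>
    simp [← cone_single, boundary_cone, capWinding_cone_cone_cone, augmentation,
      vertexSum_cone_cone, edgeSum_cone_cone_cone]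

lemma coe_edgeSum_signedAngle (x : OrderedChain V) :
    (edgeSum (signedAngle s) x : Real.Angle) = vertexSum s (boundary x) := by
  rw [vertexSum_boundary]
  refine LinearMap.congr_fun (f := Real.Angle.coeHom.toIntLinearMap ∘ₗ edgeSum (signedAngle s))
    (chainHom_ext fun l => ?_) x
  match l with
  | [] | [_] | [_, _] | _ :: _ :: _ :: _ => simp [edgeSum, signedAngle]

variable {s} {φ : V → V} {z : Real.Angle}

lemma signedAngle_of_rotate (h : ∀ v, s (φ v) = s v + z) (a b : V) :
    signedAngle s (φ a) (φ b) = signedAngle s a b := by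
  simp [signedAngle, h]

lemma winding_of_rotate (h : ∀ v, s (φ v) = s v + z) (a b c : V) :
    winding s (φ a) (φ b) (φ c) = winding s a b c := by
  simp [winding, signedAngle_of_rotate h]

lemma capWinding_push (h : ∀ v, s (φ v) = s v + z) (x : OrderedChain V) :
    capWinding s (push φ x) = push φ (capWinding s x) := by
  refine LinearMap.congr_fun (f := capWinding s ∘ₗ push φ) (g := push φ ∘ₗ capWinding s)
    (chainHom_ext fun l => ?_) x
  match l with
  | [] | [_] | [_, _] | _ :: _ :: _ :: _ =>
    simp [capWinding_single, simplexCap, winding_of_rotate h]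

/-- The cup product of the winding cocycles of a list of angle functions. -/
def cupWinding : List (V → Real.Angle) → OrderedChain V →ₗ[ℤ] ℤ
  | [] => augmentation
  | s :: ss => cupWinding ss ∘ₗ capWinding s

lemma cupWinding_emptySimplex (ss : List (V → Real.Angle)) :
    cupWinding ss emptySimplex = 0 := by
  cases ss <;> simp [cupWinding]

lemma cupWinding_boundary (ss : List (V → Real.Angle)) (x : OrderedChain V) :
    cupWinding ss (boundary x) = 0 := by
  induction ss generalizing x with
  | nil => exact augmentation_boundary x
  | cons s ss ih =>
    rw [cupWinding, LinearMap.comp_apply, ← add_sub_cancel_right (capWinding s _),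
      ← boundary_capWinding, map_sub, ih, map_smul, cupWinding_emptySimplex, smul_zero, sub_zero]

lemma cupWinding_push {ss : List (V → Real.Angle)}
    (h : ∀ s ∈ ss, ∃ z, ∀ v, s (φ v) = s v + z) (x : OrderedChain V) :
    cupWinding ss (push φ x) = cupWinding ss x := by
  induction ss generalizing x with
  | nil => exact augmentation_push φ x
  | cons s ss ih =>
    obtain ⟨⟨z, hz⟩, hss⟩ := List.forall_mem_cons.1 h
    rw [cupWinding, LinearMap.comp_apply, capWinding_push hz, ih hss, LinearMap.comp_apply]

lemma cupWinding_single_eq_zero_of_winding {ss : List (V → Real.Angle)} {l : List V}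
    (hs : s ∈ ss) (h : ∀ a ∈ l, ∀ b ∈ l, ∀ c ∈ l, winding s a b c = 0) :
    cupWinding ss (Finsupp.single l 1) = 0 := by
  induction ss generalizing l with
  | nil => simp at hs
  | cons t ss ih =>
    rw [cupWinding, LinearMap.comp_apply, capWinding_single]
    match l with
    | [] | [_] | [_, _] => simp [simplexCap]
    | a :: b :: c :: l =>
      rw [simplexCap, ← Finsupp.smul_single_one, map_smul]
      rcases List.mem_cons.1 hs with rfl | hs
      · rw [h a (by simp) b (by simp) c (by simp), zero_smul]
      · rw [ih hs fun u hu v hv w hw => h u (by simp_all) v (by simp_all) w (by simp_all),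
          smul_zero]

lemma cupWinding_single_of_length_ne {ss : List (V → Real.Angle)} {l : List V}
    (h : l.length ≠ 2 * ss.length + 1) :
    cupWinding ss (Finsupp.single l 1) = 0 := by
  induction ss generalizing l with
  | nil => exact vertexSum_single_of_length_ne _ h
  | cons s ss ih =>
    rw [cupWinding, LinearMap.comp_apply, capWinding_single]
    match l with
    | [] | [_] | [_, _] => simp [simplexCap]
    | a :: b :: c :: l =>
      rw [simplexCap, ← Finsupp.smul_single_one, map_smul, ih, smul_zero]
      simp only [List.length_cons] at h ⊢
      omega

end Winding

section ResolutionMap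

variable {p e : ℕ} {V A : Type*} [AddCommGroup A] [AddAction (Fin e → ZMod p) V]

variable (p) in
/-- The action of the `i`-th generator of `(ℤ/p)^e` on ordered chains. -/
def translate (i : Fin e) : Module.End ℤ (OrderedChain V) :=
  push ((Pi.single i 1 : Fin e → ZMod p) +ᵥ ·)

lemma translate_pow (i : Fin e) (n : ℕ) (x : OrderedChain V) :
    (translate p i ^ n) x = push ((n • (Pi.single i 1 : Fin e → ZMod p)) +ᵥ ·) x := by
  induction n generalizing x with
  | zero => simp only [zero_smul, zero_vadd]; exact (push_id x).symm
  | succ n ih =>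
    rw [pow_succ, Module.End.mul_apply, ih, translate, push_push]
    simp only [Function.comp_def, vadd_vadd, succ_nsmul]

lemma translate_pow_self (i : Fin e) :
    (translate p i : Module.End ℤ (OrderedChain V)) ^ p = 1 := by
  have smul_eq_zero : p • (Pi.single i 1 : Fin e → ZMod p) = 0 := by ext; simp
  refine LinearMap.ext fun x => ?_
  simp only [translate_pow, smul_eq_zero, zero_vadd]
  exact push_id x

lemma commute_translate (i j : Fin e) :
    Commute (translate p i : Module.End ℤ (OrderedChain V)) (translate p j) := by
  refine LinearMap.ext fun x => ?_
  simp only [translate, Module.End.mul_apply, push_push, Function.comp_def, vadd_vadd, add_comm]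

lemma boundary_translate (i : Fin e) (x : OrderedChain V) :
    boundary (translate p i x) = translate p i (boundary x) :=
  boundary_push _ x

@[simp] lemma translate_emptySimplex (i : Fin e) :
    translate p i (emptySimplex : OrderedChain V) = emptySimplex :=
  push_emptySimplex _

/-- An augmentation-preserving equivariant chain map from the tensor product of `e` periodic
resolutions to the ordered chains of `V`; `c μ` is the image of the generator in multidegree `μ`. -/
structure IsResolutionMap (p : ℕ) [AddAction (Fin e → ZMod p) V]
    (c : (Fin e → ℤ) → OrderedChain V) : Prop where
  boundary_eq (μ : Fin e → ℤ) : boundary (c μ) =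
    tensorDifferential p (translate p) c μ + if μ = 0 then emptySimplex else 0
  mem_supported (μ : Fin e → ℤ) :
    c μ ∈ Finsupp.supported ℤ ℤ {l : List V | (l.length : ℤ) = ∑ i, μ i + 1}
  eq_zero_of_neg {μ : Fin e → ℤ} {i : Fin e} (hi : μ i < 0) : c μ = 0

/-- The `i`-th generator of `(ℤ/p)^e` rotates the angle function `s` by `2πα i / p`. -/
def HasWeight (p : ℕ) [AddAction (Fin e → ZMod p) V] (α : Fin e → ℤ) (s : V → Real.Angle) :
    Prop :=
  ∀ i v, s ((Pi.single i 1 : Fin e → ZMod p) +ᵥ v) = s v + (2 * Real.pi * α i / p : ℝ)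

lemma HasWeight.capWinding_translate {α : Fin e → ℤ} {s : V → Real.Angle} (hs : HasWeight p α s)
    (i : Fin e) (x : OrderedChain V) :
    capWinding s (translate p i x) = translate p i (capWinding s x) :=
  capWinding_push (hs i) x

lemma cupWinding_translate {ss : List (V → Real.Angle)}
    (hss : ∀ s ∈ ss, ∃ α : Fin e → ℤ, HasWeight p α s) (i : Fin e) (x : OrderedChain V) :
    cupWinding ss (translate p i x) = cupWinding ss x :=
  cupWinding_push (fun s hs => (hss s hs).imp' _ fun _ hα => hα i) x

namespace IsResolutionMap

variable {c : (Fin e → ℤ) → OrderedChain V} (hc : IsResolutionMap p c)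

include hc

lemma eq_zero_of_sum_neg {μ : Fin e → ℤ} (hμ : ∑ i, μ i < 0) : c μ = 0 := by
  obtain ⟨i, -, hi⟩ := Finset.exists_lt_of_sum_lt (hμ.trans_eq Finset.sum_const_zero.symm)
  exact hc.eq_zero_of_neg hi

lemma sub_single_eq_zero {μ : Fin e → ℤ} {i : Fin e} {n : ℤ} (hi : μ i < n) :
    c (μ - Pi.single i n) = 0 :=
  hc.eq_zero_of_neg (i := i) (by simpa using hi)

lemma map_eq_zero (f : OrderedChain V →ₗ[ℤ] A) {n : ℕ}
    (hf : ∀ l : List V, l.length ≠ n + 1 → f (Finsupp.single l 1) = 0) {μ : Fin e → ℤ}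
    (hμ : ∑ i, μ i ≠ n) : f (c μ) = 0 :=
  map_eq_zero_of_mem_supported f
    (fun l (hl : (l.length : ℤ) = _) => hf l (by omega)) (hc.mem_supported μ)

lemma vertexSum_eq_zero (f : V → A) {μ : Fin e → ℤ} (hμ : μ ≠ 0) : vertexSum f (c μ) = 0 := by
  by_cases hsum : ∑ i, μ i = 0
  · obtain ⟨i, hi⟩ := exists_neg_of_sum_eq_zero hμ hsum
    rw [hc.eq_zero_of_neg hi, map_zero]
  · exact hc.map_eq_zero _ (n := 0) (fun l hl => vertexSum_single_of_length_ne f hl) hsum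

lemma augmentation_eq (μ : Fin e → ℤ) : augmentation (c μ) = if μ = 0 then 1 else 0 := by
  split_ifs with hμ
  · subst hμ
    rw [← boundary_apply_nil, hc.boundary_eq, tensorDifferential_eq_zero _ _ fun i =>
      hc.sub_single_eq_zero (i := i) (by simp)]
    simp [emptySimplex]
  · exact hc.vertexSum_eq_zero _ hμ

lemma boundary_eq_add_augmentation_smul (μ : Fin e → ℤ) : boundary (c μ) =
    tensorDifferential p (translate p) c μ + augmentation (c μ) • emptySimplex := by
  rw [hc.boundary_eq, hc.augmentation_eq, ite_smul, one_smul, zero_smul]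

variable {α : Fin e → ℤ} {s : V → Real.Angle}

lemma coe_edgeSum_signedAngle_single (hs : HasWeight p α s) (j : Fin e) :
    (edgeSum (signedAngle s) (c (Pi.single j 1)) : Real.Angle) = (2 * Real.pi * α j / p : ℝ) := by
  have ne_zero : (Pi.single j 1 : Fin e → ℤ) ≠ 0 := by simp
  rw [coe_edgeSum_signedAngle, hc.boundary_eq, if_neg ne_zero, add_zero, tensorDifferential_apply,
    Finset.sum_eq_single j, koszulSign_single, one_smul, sub_self, Pi.single_eq_same]
  · have : vertexSum s (translate p j (c 0)) =
        vertexSum s (c 0) + (2 * Real.pi * α j / p : ℝ) := by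
      rw [translate, vertexSum_push, Function.comp_def, funext (hs j), vertexSum_add_const,
        hc.augmentation_eq, if_pos rfl, one_smul]
    simp [periodicDifferential, this]
  · intro i _ hij
    rw [hc.sub_single_eq_zero (i := i) (by simp [hij]), map_zero, smul_zero]
  · simp

lemma edgeSum_eq_zero (f : V → V → A) {μ : Fin e → ℤ} (hμ : ∀ j, μ ≠ Pi.single j 1) :
    edgeSum f (c μ) = 0 := by
  by_cases hsum : ∑ i, μ i = 1
  · obtain ⟨j, hj⟩ : ∃ j, 0 < μ j := by
      by_contra! hneg
      have := Finset.sum_nonpos fun i (_ : i ∈ Finset.univ) => hneg i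
      omega
    obtain ⟨i, hi⟩ := exists_neg_of_sum_eq_zero (sub_ne_zero.2 (hμ j))
      (by rw [sum_sub_single, hsum, sub_self])
    have hij : i ≠ j := by
      rintro rfl
      simp only [Pi.sub_apply, Pi.single_eq_same] at hi
      omega
    rw [Pi.sub_apply, Pi.single_eq_of_ne hij, sub_zero] at hi
    rw [hc.eq_zero_of_neg hi, map_zero]
  · exact hc.map_eq_zero _ (n := 1) (fun l hl => edgeSum_single_of_length_ne f hl) (mod_cast hsum)

lemma two_pi_mul_augmentation_capWinding_eq_sum (hs : HasWeight p α s) (μ : Fin e → ℤ) :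
    2 * Real.pi * augmentation (capWinding s (c μ)) =
      ∑ i, if μ = Pi.single i 2 then p * edgeSum (signedAngle s) (c (Pi.single i 1)) else 0 := by
  have invariant (i : Fin e) (x : OrderedChain V) :
      edgeSum (signedAngle s) (translate p i x) = edgeSum (signedAngle s) x := by
    rw [translate, edgeSum_push]
    simp only [signedAngle_of_rotate (hs i)]
  have edgeSum_empty : edgeSum (signedAngle s) (if μ = 0 then emptySimplex else 0) = 0 := by
    split_ifs <;> simp
  rw [two_pi_mul_augmentation_capWinding, hc.boundary_eq, map_add, edgeSum_empty, add_zero,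
    tensorDifferential_apply, map_sum]
  refine Finset.sum_congr rfl fun i _ => ?_
  rw [map_smul, map_periodicDifferential_of_invariant _ (invariant i)]
  split_ifs with heven hμ hμ
  · rw [hμ, koszulSign_single, ← Pi.single_sub, one_smul, nsmul_eq_mul]
    rfl
  · rw [hc.edgeSum_eq_zero, smul_zero, smul_zero]
    intro j hj
    obtain rfl := eq_add_of_sub_eq hj
    rcases eq_or_ne i j with rfl | hij
    · exact hμ (by rw [← Pi.single_add]; rfl)
    · simp [hij] at heven
  · simp [hμ] at heven
  · rw [smul_zero]

lemma dvd_augmentation_capWinding_sub [NeZero p] (hs : HasWeight p α s) (μ : Fin e → ℤ) :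
    (p : ℤ) ∣ augmentation (capWinding s (c μ)) -
      ∑ i, α i * augmentation (c (μ - Pi.single i 2)) := by
  have exists_turns (i : Fin e) : ∃ k : ℤ, p * edgeSum (signedAngle s) (c (Pi.single i 1)) =
      2 * Real.pi * (α i + p * k : ℤ) := by
    obtain ⟨k, hk⟩ := Real.Angle.angle_eq_iff_two_pi_dvd_sub.1
      (hc.coe_edgeSum_signedAngle_single hs i)
    refine ⟨k, ?_⟩
    rw [sub_eq_iff_eq_add.1 hk]
    push_cast
    field_simp [NeZero.ne p]
    ring
  choose k hk using exists_turns
  have augmentation_eq_sum : augmentation (capWinding s (c μ)) =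
      ∑ i, if μ = Pi.single i 2 then α i + p * k i else 0 := by
    refine Int.cast_injective (α := ℝ) (mul_left_cancel₀ Real.two_pi_pos.ne' ?_)
    rw [hc.two_pi_mul_augmentation_capWinding_eq_sum hs, Int.cast_sum, Finset.mul_sum]
    refine Finset.sum_congr rfl fun i _ => ?_
    split_ifs <;> simp [hk]
  rw [augmentation_eq_sum, ← Finset.sum_sub_distrib]
  refine Finset.dvd_sum fun i _ => ?_
  simp only [hc.augmentation_eq, sub_eq_zero]
  split_ifs <;> simp

/-- The cap product with `s` and the multiplication by its Euler class in the cohomology of the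
group are homotopic modulo `p`. -/
theorem dvd_cupWinding_cons_sub [NeZero p] [Nonempty V] (hs : HasWeight p α s)
    {ss : List (V → Real.Angle)} (hss : ∀ s ∈ ss, ∃ α : Fin e → ℤ, HasWeight p α s)
    (μ : Fin e → ℤ) :
    (p : ℤ) ∣ cupWinding (s :: ss) (c μ) - ∑ i, α i * cupWinding ss (c (μ - Pi.single i 2)) := by
  let a (μ : Fin e → ℤ) : OrderedChain V :=
    capWinding s (c μ) - ∑ i, α i • c (μ - Pi.single i 2)
  let S : Submodule ℤ (OrderedChain V) := LinearMap.range (LinearMap.lsmul ℤ _ (p : ℤ))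
  have map_mem_S (f : Module.End ℤ (OrderedChain V)) : ∀ x ∈ S, f x ∈ S := by
    rintro _ ⟨x, rfl⟩
    exact ⟨f x, by simp⟩
  have a_neg (μ : Fin e → ℤ) (hμ : ∑ i, μ i < 0) : a μ = 0 := by
    have (i : Fin e) : c (μ - Pi.single i 2) = 0 :=
      hc.eq_zero_of_sum_neg (by rw [sum_sub_single]; omega)
    simp [a, this, hc.eq_zero_of_sum_neg hμ]
  have diff_a (μ) : tensorDifferential p (translate p) a μ =
      capWinding s (tensorDifferential p (translate p) c μ) -
        ∑ i, α i • tensorDifferential p (translate p) c (μ - Pi.single i 2) := by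
    have a_eq : a = capWinding s ∘ c - ∑ i, α i • fun ν => c (ν - Pi.single i 2) := by
      funext ν
      simp [a]
    rw [map_tensorDifferential (capWinding s) hs.capWinding_translate, a_eq, map_sub, map_sum]
    simp [tensorDifferential_translate_two]
  have boundary_a (μ) : boundary (a μ) - tensorDifferential p (translate p) a μ ∈ S := by
    obtain ⟨k, hk⟩ := hc.dvd_augmentation_capWinding_sub hs μ
    have : boundary (a μ) - tensorDifferential p (translate p) a μ = (p * k) • emptySimplex := by
      rw [diff_a, ← hk]
      simp only [a, map_sub, map_sum, map_smul, map_add, boundary_capWinding,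
        hc.boundary_eq_add_augmentation_smul, capWinding_emptySimplex, smul_zero, add_zero,
        smul_add, Finset.sum_add_distrib, smul_smul, ← Finset.sum_smul, sub_smul]
      abel
    exact ⟨k • emptySimplex, by rw [this, mul_smul]; rfl⟩
  obtain ⟨h, hh⟩ := exists_nullHomotopy (κ := cone (Classical.arbitrary V)) translate_pow_self
    commute_translate (fun i => boundary_translate i) (boundary_cone _) (fun i => map_mem_S _)
    (map_mem_S _) a_neg boundary_a
  obtain ⟨y, hy⟩ := hh μ
  have map_a : cupWinding (s :: ss) (c μ) - ∑ i, α i * cupWinding ss (c (μ - Pi.single i 2)) =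
      cupWinding ss (a μ) := by
    simp [a, cupWinding]
  have map_y : cupWinding ss (a μ) - cupWinding ss (tensorDifferential p (translate p) h μ) =
      p * cupWinding ss y := by
    simpa [cupWinding_boundary] using congrArg (cupWinding ss) hy.symm
  rw [map_a, sub_eq_iff_eq_add.1 map_y]
  exact dvd_add (dvd_mul_right _ _)
    (dvd_map_tensorDifferential _ (cupWinding_translate hss) h μ)

end IsResolutionMap

/-- The Euler class of the character of weight `α`, as a linear form on the polynomial part of the
cohomology of `(ℤ/p)^e`. -/
def weightForm (p : ℕ) (α : Fin e → ℤ) : MvPolynomial (Fin e) (ZMod p) :=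
  ∑ i, (α i : ZMod p) • MvPolynomial.X i

lemma weightForm_ne_zero [Fact p.Prime] {α : Fin e → ℤ} {i : Fin e} (hi : ¬(p : ℤ) ∣ α i) :
    weightForm p α ≠ 0 := by
  have coeff_eq : (weightForm p α).coeff (Finsupp.single i 1) = (α i : ZMod p) := by
    simp [weightForm, MvPolynomial.coeff_sum, MvPolynomial.coeff_X, Finsupp.single_left_inj]
  intro h
  rw [h, MvPolynomial.coeff_zero] at coeff_eq
  exact hi ((ZMod.intCast_zmod_eq_zero_iff_dvd _ _).1 coeff_eq.symm)

lemma coeff_weightForm_mul (α : Fin e → ℤ) (P : MvPolynomial (Fin e) (ZMod p)) (m : Fin e →₀ ℕ) :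
    (weightForm p α * P).coeff m =
      ∑ i, (α i : ZMod p) * if i ∈ m.support then P.coeff (m - Finsupp.single i 1) else 0 := by
  simp only [weightForm, Finset.sum_mul, MvPolynomial.coeff_sum, smul_mul_assoc,
    MvPolynomial.coeff_smul, MvPolynomial.coeff_X_mul', smul_eq_mul]

namespace IsResolutionMap

variable {c : (Fin e → ℤ) → OrderedChain V} (hc : IsResolutionMap p c)

include hc

variable {κ : Type*} {α : κ → Fin e → ℤ} {s : κ → V → Real.Angle}

lemma intCast_cupWinding_eq_coeff [NeZero p] [Nonempty V] (hs : ∀ k, HasWeight p (α k) (s k))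
    (L : List κ) (m : Fin e →₀ ℕ) :
    (cupWinding (L.map s) (c fun i => 2 * m i) : ZMod p) =
      ((L.map fun k => weightForm p (α k)).prod).coeff m := by
  induction L generalizing m with
  | nil =>
    have : (fun i => 2 * (m i : ℤ)) = 0 ↔ 0 = m := by
      simp [funext_iff, DFunLike.ext_iff, eq_comm]
    simp [cupWinding, hc.augmentation_eq, this, MvPolynomial.coeff_one]
  | cons k L ih =>
    have dvd_sub := hc.dvd_cupWinding_cons_sub (hs k) (ss := L.map s)
      (List.forall_mem_map.2 fun k _ => ⟨α k, hs k⟩) fun i => 2 * m i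
    rw [← ZMod.intCast_zmod_eq_zero_iff_dvd, Int.cast_sub, sub_eq_zero] at dvd_sub
    rw [List.map_cons, dvd_sub, List.map_cons, List.prod_cons, coeff_weightForm_mul, Int.cast_sum]
    refine Finset.sum_congr rfl fun i _ => ?_
    rw [Int.cast_mul]
    congr 1
    split_ifs with hi
    · rw [← ih]
      congr 3
      funext j
      have : 1 ≤ m i := Nat.one_le_iff_ne_zero.2 (Finsupp.mem_support_iff.1 hi)
      rcases eq_or_ne j i with rfl | hij
      · simp [Nat.cast_sub this, mul_sub]
      · simp [hij]
    · have : m i = 0 := Finsupp.notMem_support_iff.1 hi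
      rw [hc.sub_single_eq_zero (by simp [this]), map_zero, Int.cast_zero]

theorem exists_cupWinding_ne_zero [Fact p.Prime] [Nonempty V]
    (hs : ∀ k, HasWeight p (α k) (s k)) (hα : ∀ k, ∃ i, ¬(p : ℤ) ∣ α k i) (L : List κ) :
    ∃ μ : Fin e → ℤ, ∑ i, μ i = 2 * L.length ∧ cupWinding (L.map s) (c μ) ≠ 0 := by
  have prod_ne_zero : (L.map fun k => weightForm p (α k)).prod ≠ 0 := by
    refine List.prod_ne_zero fun h => ?_
    obtain ⟨k, -, hk⟩ := List.mem_map.1 h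
    obtain ⟨i, hi⟩ := hα k
    exact weightForm_ne_zero hi hk
  obtain ⟨m, hm⟩ := MvPolynomial.ne_zero_iff.1 prod_ne_zero
  rw [← hc.intCast_cupWinding_eq_coeff hs] at hm
  have cup_ne_zero : cupWinding (L.map s) (c fun i => 2 * m i) ≠ 0 := fun h => hm (by simp [h])
  refine ⟨_, ?_, cup_ne_zero⟩
  by_contra hsum
  exact cup_ne_zero (hc.map_eq_zero _ (n := 2 * L.length)
    (fun l hl => cupWinding_single_of_length_ne (by simpa using hl)) (mod_cast hsum))

end IsResolutionMap

end ResolutionMap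

section Existence

variable {p e : ℕ} {V : Type*} [AddAction (Fin e → ZMod p) V]

variable (p e) in
/-- The simplices `[g (n - 1) +ᵥ v (n - 1), …, g 0 +ᵥ v 0]` of the join of the orbits of `v 0`, …,
`v (n - 1)`. -/
def orbitJoin (v : ℕ → V) (n : ℕ) : Set (List V) :=
  {l | ∃ g : ℕ → Fin e → ZMod p, l = (List.range n).reverse.map fun j => g j +ᵥ v j}

lemma translate_mem_supported_orbitJoin {v : ℕ → V} {n : ℕ} (i : Fin e) {x : OrderedChain V}
    (hx : x ∈ Finsupp.supported ℤ ℤ (orbitJoin p e v n)) :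
    translate p i x ∈ Finsupp.supported ℤ ℤ (orbitJoin p e v n) := by
  refine map_mem_of_mem_supported _ ?_ hx
  rintro _ ⟨g, rfl⟩
  rw [translate, push_single]
  refine Finsupp.single_mem_supported ℤ 1 ⟨fun j => Pi.single i 1 + g j, ?_⟩
  simp [Function.comp_def, add_vadd]

lemma cone_mem_supported_orbitJoin {v : ℕ → V} {n : ℕ} {x : OrderedChain V}
    (hx : x ∈ Finsupp.supported ℤ ℤ (orbitJoin p e v n)) :
    cone (v n) x ∈ Finsupp.supported ℤ ℤ (orbitJoin p e v (n + 1)) := by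
  refine map_mem_of_mem_supported _ ?_ hx
  rintro _ ⟨g, rfl⟩
  rw [cone_single]
  refine Finsupp.single_mem_supported ℤ 1 ⟨Function.update g n 0, ?_⟩
  have update_eq : ∀ j ∈ (List.range n).reverse, g j +ᵥ v j = Function.update g n 0 j +ᵥ v j := by
    intro j hj
    have : j < n := by simpa using hj
    rw [Function.update_of_ne this.ne]
  rw [List.range_succ, List.reverse_append, List.map_append, ← List.map_congr_left update_eq]
  simp

lemma tensorDifferential_emptySimplex (μ : Fin e → ℤ) :
    tensorDifferential p (translate p) (fun ν => if ν = 0 then emptySimplex else 0) μ =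
      (0 : OrderedChain V) := by
  rw [tensorDifferential_apply]
  refine Finset.sum_eq_zero fun i _ => ?_
  split_ifs with hμ
  · have odd : ¬Even (μ i) := by simp [sub_eq_zero.1 hμ]
    rw [periodicDifferential, if_neg odd]
    simp
  · rw [map_zero, smul_zero]

section ConeRecursion

variable {v : ℕ → V} {c : (Fin e → ℤ) → OrderedChain V} (c_neg : ∀ μ, ∑ i, μ i < 0 → c μ = 0)
  (c_eq : ∀ μ, c μ = cone (v (∑ i, μ i).toNat)
    (tensorDifferential p (translate p) c μ + if μ = 0 then emptySimplex else 0))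

include c_neg c_eq

lemma mem_supported_orbitJoin_of_cone_recursion (μ : Fin e → ℤ) :
    c μ ∈ Finsupp.supported ℤ ℤ (orbitJoin p e v (∑ i, μ i + 1).toNat) := by
  induction μ using multidegree_induction with
  | neg μ hμ => simp [c_neg μ hμ]
  | step μ hμ ih =>
    have toNat_succ : (∑ i, μ i + 1).toNat = (∑ i, μ i).toNat + 1 := by omega
    rw [c_eq, toNat_succ]
    refine cone_mem_supported_orbitJoin (Submodule.add_mem _ (tensorDifferential_mem
      (fun i x => translate_mem_supported_orbitJoin i) fun i => ?_) ?_)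
    · simpa [sum_sub_single] using ih i
    · split_ifs with h
      · subst h
        exact Finsupp.single_mem_supported ℤ 1 ⟨0, by simp⟩
      · exact Submodule.zero_mem _

lemma boundary_eq_of_cone_recursion (μ : Fin e → ℤ) : boundary (c μ) =
    tensorDifferential p (translate p) c μ + if μ = 0 then emptySimplex else 0 := by
  induction μ using multidegree_induction with
  | neg μ hμ =>
    have : μ ≠ 0 := by rintro rfl; simp at hμ
    rw [c_neg μ hμ, tensorDifferential_eq_zero_of_sum_neg _ _ c_neg hμ, if_neg this, map_zero,
      add_zero]
  | step μ _ ih =>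
    have boundary_diff : boundary (tensorDifferential p (translate p) c μ) = 0 := by
      rw [map_tensorDifferential boundary boundary_translate,
        tensorDifferential_congr p _ (c := boundary ∘ c)
          (c' := tensorDifferential p (translate p) c + fun ν => if ν = 0 then emptySimplex else 0)
          (by simpa using ih), map_add, Pi.add_apply,
        tensorDifferential_tensorDifferential translate_pow_self commute_translate,
        Pi.zero_apply, zero_add, tensorDifferential_emptySimplex]
    have boundary_empty : boundary (if μ = 0 then emptySimplex else (0 : OrderedChain V)) = 0 := by
      split_ifs <;> simp
    rw [c_eq, boundary_cone, map_add, boundary_diff, boundary_empty, add_zero, map_zero, sub_zero]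

lemma eq_zero_of_cone_recursion {μ : Fin e → ℤ} {i : Fin e} (hi : μ i < 0) : c μ = 0 := by
  induction μ using multidegree_induction with
  | neg μ hμ => exact c_neg μ hμ
  | step μ _ ih =>
    have pred_neg (j) : (μ - Pi.single j 1 : Fin e → ℤ) i < 0 := by
      have : (0 : ℤ) ≤ (Pi.single j 1 : Fin e → ℤ) i := by
        rw [Pi.single_apply]; split_ifs <;> simp
      rw [Pi.sub_apply]
      omega
    have : μ ≠ 0 := by rintro rfl; simp at hi
    rw [c_eq, tensorDifferential_eq_zero p _ fun j => ih j (pred_neg j), if_neg this, add_zero,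
      map_zero]

end ConeRecursion

/-- The recursion `c μ = v (∑ μ) * D c μ` solves `∂ c = D c` because `v n * ·` is a contraction. -/
theorem exists_isResolutionMap (v : ℕ → V) :
    ∃ c : (Fin e → ℤ) → OrderedChain V, IsResolutionMap p c ∧
      ∀ μ, c μ ∈ Finsupp.supported ℤ ℤ (orbitJoin p e v (∑ i, μ i + 1).toNat) := by
  obtain ⟨c, c_neg, c_eq⟩ := exists_eq_step_tensorDifferential p
    (translate p : Fin e → Module.End ℤ (OrderedChain V))
    (fun μ x => cone (v (∑ i, μ i).toNat) (x + if μ = 0 then emptySimplex else 0)) (by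
      intro μ hμ
      rw [if_neg (by rintro rfl; simp at hμ), add_zero, map_zero])
  have c_mem := mem_supported_orbitJoin_of_cone_recursion c_neg c_eq
  refine ⟨c, ⟨boundary_eq_of_cone_recursion c_neg c_eq, fun μ => ?_,
    eq_zero_of_cone_recursion c_neg c_eq⟩, c_mem⟩
  rcases lt_or_ge (∑ i, μ i) 0 with hμ | hμ
  · simp [c_neg μ hμ]
  · refine Finsupp.supported_mono ?_ (c_mem μ)
    rintro _ ⟨g, rfl⟩
    simp only [List.length_map, List.length_reverse, List.length_range, Set.mem_ofPred_eq]
    omega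

end Existence

section Subdivision

variable {V : Type*}

/-- Subdivision of the simplices with `n` vertices, with the new vertex `b l` in the interior of
the simplex `l`: the cone over the subdivided boundary. -/
def subdivide (b : List V → V) : ℕ → Module.End ℤ (OrderedChain V)
  | 0 => (Finsupp.lapply []).smulRight emptySimplex
  | n + 1 => Finsupp.linearCombination ℤ fun l => cone (b l) (subdivide b n (simplexBoundary l))

variable {b : List V → V}

lemma subdivide_succ_single (n : ℕ) (l : List V) :
    subdivide b (n + 1) (Finsupp.single l 1) =
      cone (b l) (subdivide b n (boundary (Finsupp.single l 1))) := by
  simp [subdivide, boundary_single]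

lemma subdivide_zero_emptySimplex : subdivide b 0 emptySimplex = emptySimplex := by
  simp [subdivide, emptySimplex]

lemma boundary_subdivide_zero (x : OrderedChain V) : boundary (subdivide b 0 x) = 0 := by
  simp [subdivide]

lemma boundary_subdivide_of_boundary_eq_zero {n : ℕ}
    (h : ∀ x, boundary (subdivide b n (boundary x)) = 0) (x : OrderedChain V) :
    boundary (subdivide b (n + 1) x) = subdivide b n (boundary x) :=
  LinearMap.congr_fun (f := boundary ∘ₗ subdivide b (n + 1)) (g := subdivide b n ∘ₗ boundary)
    (chainHom_ext fun l => by
      simp only [LinearMap.comp_apply]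
      rw [subdivide_succ_single, boundary_cone, h, map_zero, sub_zero]) x

lemma boundary_subdivide (n : ℕ) (x : OrderedChain V) :
    boundary (subdivide b (n + 1) x) = subdivide b n (boundary x) := by
  induction n generalizing x with
  | zero => exact boundary_subdivide_of_boundary_eq_zero (fun _ => boundary_subdivide_zero _) x
  | succ n ih =>
    exact boundary_subdivide_of_boundary_eq_zero
      (fun y => by rw [ih, boundary_boundary, map_zero]) x

lemma subdivide_push {φ : V → V} (hb : ∀ l ≠ [], b (l.map φ) = φ (b l)) (n : ℕ)
    (x : OrderedChain V) : subdivide b n (push φ x) = push φ (subdivide b n x) := by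
  induction n generalizing x with
  | zero =>
    refine LinearMap.congr_fun (f := subdivide b 0 ∘ₗ push φ) (g := push φ ∘ₗ subdivide b 0)
      (chainHom_ext fun l => ?_) x
    cases l <;> simp [subdivide]
  | succ n ih =>
    refine LinearMap.congr_fun (f := subdivide b (n + 1) ∘ₗ push φ)
      (g := push φ ∘ₗ subdivide b (n + 1)) (chainHom_ext fun l => ?_) x
    simp only [LinearMap.comp_apply]
    rcases eq_or_ne l [] with rfl | hl
    · simp [subdivide, simplexBoundary]
    · rw [subdivide_succ_single, push_single, subdivide_succ_single, hb l hl, push_cone, ← ih,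
        ← boundary_push, push_single]

lemma simplexBoundary_mem_supported (l : List V) : simplexBoundary l ∈
    Finsupp.supported ℤ ℤ {m : List V | m.Sublist l ∧ m.length + 1 = l.length} := by
  induction l with
  | nil => exact Submodule.zero_mem _
  | cons v l ih =>
    refine Submodule.sub_mem _ (Finsupp.single_mem_supported ℤ 1 ⟨List.sublist_cons_self v l, rfl⟩)
      (map_mem_of_mem_supported _ ?_ ih)
    rintro m ⟨hm, hlen⟩
    rw [cone_single]
    exact Finsupp.single_mem_supported ℤ 1 ⟨hm.cons_cons v, by simp [hlen]⟩

lemma subdivide_single_mem_supported {B : List V → List V → Prop} (nil : B [] [])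
    (cons : ∀ l m l', l ≠ [] → m.Sublist l → B m l' → B l (b l :: l')) (l : List V) :
    subdivide b l.length (Finsupp.single l 1) ∈
      Finsupp.supported ℤ ℤ {l' | l'.length = l.length ∧ B l l'} := by
  suffices ∀ n (l : List V), l.length = n → subdivide b n (Finsupp.single l 1) ∈
      Finsupp.supported ℤ ℤ {l' | l'.length = n ∧ B l l'} from this _ l rfl
  intro n
  induction n with
  | zero =>
    intro l hl
    rw [List.eq_nil_of_length_eq_zero hl]
    exact subdivide_zero_emptySimplex ▸ Finsupp.single_mem_supported ℤ 1 ⟨rfl, nil⟩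
  | succ n ih =>
    intro l hl
    rw [subdivide_succ_single, boundary_single]
    refine map_mem_of_mem_supported (cone (b l) ∘ₗ subdivide b n) ?_
      (simplexBoundary_mem_supported l)
    rintro m ⟨hm, hlen⟩
    refine map_mem_of_mem_supported (cone (b l)) ?_ (ih m (by omega))
    rintro l' ⟨hl', hB⟩
    rw [cone_single]
    exact Finsupp.single_mem_supported ℤ 1
      ⟨by simp [hl'], cons l m l' (List.ne_nil_of_length_eq_add_one hl) hm hB⟩

lemma IsResolutionMap.subdivide {p e : ℕ} [AddAction (Fin e → ZMod p) V]
    {c : (Fin e → ℤ) → OrderedChain V} (hc : IsResolutionMap p c)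
    (hb : ∀ (g : Fin e → ZMod p), ∀ l ≠ [], b (l.map (g +ᵥ ·)) = g +ᵥ b l) :
    IsResolutionMap p fun μ => subdivide b (∑ i, μ i + 1).toNat (c μ) where
  boundary_eq μ := by
    rcases lt_or_ge (∑ i, μ i) 0 with hμ | hμ
    · rw [hc.eq_zero_of_sum_neg hμ, tensorDifferential_eq_zero_of_sum_neg _ _
        (fun ν hν => by rw [hc.eq_zero_of_sum_neg hν, map_zero]) hμ,
        if_neg (by rintro rfl; simp at hμ)]
      simp
    · obtain ⟨n, hn⟩ := Int.eq_ofNat_of_zero_le hμ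
      have toNat_eq : (∑ i, μ i + 1).toNat = n + 1 := by omega
      rw [toNat_eq, boundary_subdivide, hc.boundary_eq, map_add, map_tensorDifferential
        (TopologicalTverberg.subdivide b n) (τ := translate p)
        (fun i x => subdivide_push (hb _) n x)]
      congr 1
      · refine tensorDifferential_congr p _ fun i => ?_
        simp [hn]
      · split_ifs with h
        · subst h
          obtain rfl : n = 0 := by simpa using hn.symm
          exact subdivide_zero_emptySimplex
        · exact map_zero _
  mem_supported μ := by
    refine map_mem_of_mem_supported _ ?_ (hc.mem_supported μ)
    intro l (hl : (l.length : ℤ) = _)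
    rw [← hl, Int.toNat_natCast]
    refine Finsupp.supported_mono ?_ (subdivide_single_mem_supported (B := fun _ _ => True)
      trivial (fun _ _ _ _ _ _ => trivial) l)
    rintro l' ⟨hl', -⟩
    exact congrArg Nat.cast hl'
  eq_zero_of_neg hi := by rw [hc.eq_zero_of_neg hi, map_zero]

end Subdivision

section Barycenter

variable {E F : Type*} [AddCommGroup E] [Module ℝ E] [AddCommGroup F] [Module ℝ F]

/-- The barycenter of a list of points, counted with multiplicity (`0` for the empty list). -/
def barycenter (l : List E) : E := (l.length : ℝ)⁻¹ • l.sum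

lemma barycenter_eq_sum_getElem (l : List E) :
    barycenter l = ∑ j : Fin l.length, (l.length : ℝ)⁻¹ • l[j] := by
  rw [barycenter, ← Finset.smul_sum]
  simp

lemma map_barycenter (φ : E →ₗ[ℝ] F) (l : List E) :
    φ (barycenter l) = barycenter (l.map φ) := by
  simp [barycenter, map_list_sum]

lemma barycenter_mem {K : Set E} (hK : Convex ℝ K) {l : List E} (hl : l ≠ [])
    (h : ∀ x ∈ l, x ∈ K) : barycenter l ∈ K := by
  rw [barycenter_eq_sum_getElem]
  exact hK.sum_mem (fun _ _ => by positivity) (by simp [hl]) fun j _ => h _ (List.getElem_mem _)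

lemma dist_barycenter_le {E : Type*} [NormedAddCommGroup E] [NormedSpace ℝ E] {l : List E} {a : E}
    (ha : a ∈ l) {ε : ℝ} (hε : ∀ x ∈ l, dist x a ≤ ε) :
    dist (barycenter l) a ≤ (1 - 1 / l.length) * ε := by
  obtain ⟨i, hi, rfl⟩ := List.getElem_of_mem ha
  have length_pos : (0 : ℝ) < l.length := by exact_mod_cast (Nat.zero_le i).trans_lt hi
  have sub_eq : barycenter l - l[i] = (l.length : ℝ)⁻¹ • ∑ j : Fin l.length, (l[j] - l[i]) := by
    rw [Finset.sum_sub_distrib, smul_sub, Finset.sum_const, Finset.card_univ, Fintype.card_fin,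
      ← Nat.cast_smul_eq_nsmul ℝ, inv_smul_smul₀ length_pos.ne', barycenter_eq_sum_getElem,
      Finset.smul_sum]
  have norm_sum_le : ‖∑ j : Fin l.length, (l[j] - l[i])‖ ≤ (l.length - 1) * ε := by
    rw [← Finset.sum_erase Finset.univ (a := ⟨i, hi⟩) (by simp)]
    refine (norm_sum_le_of_le _ fun j _ => (dist_eq_norm _ _).symm.trans_le
      (hε _ (List.getElem_mem j.2))).trans_eq ?_
    rw [Finset.sum_const, Finset.card_erase_of_mem (Finset.mem_univ _), Finset.card_univ,
      Fintype.card_fin, nsmul_eq_mul, Nat.cast_pred ((Nat.zero_le i).trans_lt hi)]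
  calc dist (barycenter l) l[i] = (l.length : ℝ)⁻¹ * ‖∑ j : Fin l.length, (l[j] - l[i])‖ := by
        rw [dist_eq_norm, sub_eq, norm_smul, norm_inv, Real.norm_natCast]
    _ ≤ (l.length : ℝ)⁻¹ * ((l.length - 1) * ε) := by gcongr
    _ = (1 - 1 / l.length) * ε := by field_simp

end Barycenter

section Mesh

variable {V E : Type*} [NormedAddCommGroup E]

/-- The simplices of diameter at most `ε` with all vertices in a common member of the family `K`;
`π v` is the position of the vertex `v`. -/
def smallSimplices {I : Type*} (π : V → E) (K : I → Set E) (ε : ℝ) : Set (List V) :=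
  {l | (∃ S, ∀ v ∈ l, π v ∈ K S) ∧ ∀ u ∈ l, ∀ v ∈ l, dist (π u) (π v) ≤ ε}

lemma smallSimplices_mono {I : Type*} (π : V → E) (K : I → Set E) {ε δ : ℝ} (h : ε ≤ δ) :
    smallSimplices π K ε ⊆ smallSimplices π K δ :=
  fun _ hl => ⟨hl.1, fun u hu v hv => (hl.2 u hu v hv).trans h⟩

variable [NormedSpace ℝ E] {π : V → E} {b : List V → V}
  (hb : ∀ l ≠ [], π (b l) = barycenter (l.map π))

include hb

lemma dist_cons_barycenter_le {M : ℕ} {ε : ℝ} {l l' : List V} (hlM : l.length ≤ M) (hl : l ≠ [])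
    (hε : ∀ u ∈ l, ∀ v ∈ l, dist (π u) (π v) ≤ ε)
    (hconv : ∀ K : Set E, Convex ℝ K → (∀ v ∈ l, π v ∈ K) → ∀ v ∈ l', π v ∈ K)
    (hl' : ∀ u ∈ l', ∀ v ∈ l', dist (π u) (π v) ≤ (1 - 1 / M) * ε) :
    ∀ u ∈ b l :: l', ∀ v ∈ b l :: l', dist (π u) (π v) ≤ (1 - 1 / M) * ε := by
  have length_pos : 0 < l.length := List.length_pos_of_ne_nil hl
  have ε_nonneg : 0 ≤ ε := by
    obtain ⟨a, ha⟩ := List.exists_mem_of_ne_nil l hl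
    exact dist_nonneg.trans (hε a ha a ha)
  have dist_vertex_le : ∀ v ∈ l, dist (π v) (π (b l)) ≤ (1 - 1 / M) * ε := by
    intro v hv
    rw [dist_comm, hb l hl]
    refine (dist_barycenter_le (ε := ε) (List.mem_map_of_mem hv) ?_).trans ?_
    · simpa using fun u hu => hε u hu v hv
    · rw [List.length_map]
      gcongr
  have dist_le := hconv _ (convex_closedBall _ _) dist_vertex_le
  simp only [List.mem_cons, forall_eq_or_imp]
  refine ⟨⟨?_, fun v hv => dist_comm (π v) _ ▸ dist_le v hv⟩, fun u hu => ⟨dist_le u hu, hl' u hu⟩⟩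
  have : (1 : ℝ) / M ≤ 1 := by
    rw [div_le_one₀ (by exact_mod_cast length_pos.trans_le hlM)]
    exact_mod_cast length_pos.trans_le hlM
  rw [dist_self]
  exact mul_nonneg (sub_nonneg.2 this) ε_nonneg

lemma subdivide_mem_supported_smallSimplices {I : Type*} {K : I → Set E}
    (hK : ∀ S, Convex ℝ (K S)) {M : ℕ} {ε : ℝ} {l : List V} (hlM : l.length ≤ M)
    (hl : l ∈ smallSimplices π K ε) :
    subdivide b l.length (Finsupp.single l 1) ∈
      Finsupp.supported ℤ ℤ (smallSimplices π K ((1 - 1 / M) * ε)) := by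
  let B (l l' : List V) : Prop := l.length ≤ M → (∀ u ∈ l, ∀ v ∈ l, dist (π u) (π v) ≤ ε) →
    (∀ C : Set E, Convex ℝ C → (∀ v ∈ l, π v ∈ C) → ∀ v ∈ l', π v ∈ C) ∧
      ∀ u ∈ l', ∀ v ∈ l', dist (π u) (π v) ≤ (1 - 1 / M) * ε
  have B_cons (l m l' : List V) (hl : l ≠ []) (hm : m.Sublist l) (hB : B m l') :
      B l (b l :: l') := by
    intro hlM hε
    obtain ⟨hconv, hdist⟩ := hB (hm.length_le.trans hlM) fun u hu v hv =>
      hε u (hm.subset hu) v (hm.subset hv)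
    replace hconv (C : Set E) (hC : Convex ℝ C) (hlC : ∀ v ∈ l, π v ∈ C) :=
      hconv C hC fun v hv => hlC v (hm.subset hv)
    refine ⟨fun C hC hlC => ?_, dist_cons_barycenter_le hb hlM hl hε hconv hdist⟩
    refine List.forall_mem_cons.2 ⟨?_, hconv C hC hlC⟩
    rw [hb l hl]
    exact barycenter_mem hC (by simpa using hl) (by simpa using hlC)
  obtain ⟨⟨S, hS⟩, hε⟩ := hl
  refine Finsupp.supported_mono ?_ (subdivide_single_mem_supported (B := B) (by simp [B]) B_cons l)
  rintro l' ⟨-, hB⟩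
  obtain ⟨hconv, hdist⟩ := hB hlM hε
  exact ⟨⟨S, hconv _ (hK S) hS⟩, hdist⟩

lemma IsResolutionMap.exists_refinement {p e : ℕ} [AddAction (Fin e → ZMod p) V]
    (hb' : ∀ (g : Fin e → ZMod p), ∀ l ≠ [], b (l.map (g +ᵥ ·)) = g +ᵥ b l)
    {I : Type*} {K : I → Set E} (hK : ∀ S, Convex ℝ (K S)) {M : ℕ} {ε : ℝ}
    {c : (Fin e → ℤ) → OrderedChain V} (hc : IsResolutionMap p c)
    (hcK : ∀ μ, ∑ i, μ i < (M : ℤ) → c μ ∈ Finsupp.supported ℤ ℤ (smallSimplices π K ε)) (n : ℕ) :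
    ∃ c' : (Fin e → ℤ) → OrderedChain V, IsResolutionMap p c' ∧ ∀ μ, ∑ i, μ i < (M : ℤ) →
      c' μ ∈ Finsupp.supported ℤ ℤ (smallSimplices π K ((1 - 1 / M) ^ n * ε)) := by
  induction n with
  | zero => simpa using ⟨c, hc, hcK⟩
  | succ n ih =>
    obtain ⟨c', hc', hcK'⟩ := ih
    refine ⟨_, hc'.subdivide hb', fun μ hμ => ?_⟩
    have c'_mem := Submodule.mem_inf.2 ⟨hc'.mem_supported μ, hcK' μ hμ⟩
    rw [← Finsupp.supported_inter] at c'_mem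
    refine map_mem_of_mem_supported _ ?_ c'_mem
    rintro l ⟨hl, hlK⟩
    have length_eq : (l.length : ℤ) = ∑ i, μ i + 1 := hl
    rw [← length_eq, Int.toNat_natCast, pow_succ', mul_assoc]
    exact subdivide_mem_supported_smallSimplices hb hK (by omega) hlK

end Mesh

section Join

variable {ι G : Type*} [DecidableEq G]

/-- The linear parametrization, by the simplex on `ι`, of the face of the join of `ι` copies of `G`
which has the vertex `S i` in the `i`-th copy. -/
def joinEmbed (S : ι → G) : (ι → ℝ) →ₗ[ℝ] ι → G → ℝ :=
  LinearMap.pi fun i => LinearMap.single ℝ _ (S i) ∘ₗ LinearMap.proj i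

lemma joinEmbed_apply (S : ι → G) (x : ι → ℝ) (i : ι) :
    joinEmbed S x i = Pi.single (S i) (x i) := rfl

variable [Fintype ι]

/-- The face with vertices `S i` of the join of `ι` copies of the discrete space `G`. -/
def joinFace (S : ι → G) : Set (ι → G → ℝ) := joinEmbed S '' stdSimplex ℝ ι

lemma convex_joinFace (S : ι → G) : Convex ℝ (joinFace S) :=
  (convex_stdSimplex ℝ ι).linear_image _

variable (ι G) in
/-- The join of `ι` copies of the discrete space `G`, realized in `ι → G → ℝ`. -/
def join : Set (ι → G → ℝ) := ⋃ S, joinFace S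

lemma isCompact_join [Finite G] : IsCompact (join ι G) :=
  isCompact_iUnion fun S =>
    (isCompact_stdSimplex ℝ ι).image (joinEmbed S).continuous_of_finiteDimensional

lemma norm_le_one_of_mem_joinFace [Fintype G] {S : ι → G} {y : ι → G → ℝ} (hy : y ∈ joinFace S) :
    ‖y‖ ≤ 1 := by
  obtain ⟨x, hx, rfl⟩ := hy
  refine (pi_norm_le_iff_of_nonneg zero_le_one).2 fun i => ?_
  rw [joinEmbed_apply, Pi.norm_single, Real.norm_of_nonneg (hx.1 i)]
  exact hx.2 ▸ Finset.single_le_sum (fun j _ => hx.1 j) (Finset.mem_univ i)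

lemma single_mem_joinFace [DecidableEq ι] (S : ι → G) (i : ι) :
    Pi.single i (Pi.single (S i) 1) ∈ joinFace S := by
  refine ⟨Pi.single i 1, single_mem_stdSimplex ℝ i, ?_⟩
  ext j : 1
  rcases eq_or_ne j i with rfl | hj
  · simp [joinEmbed_apply]
  · simp [joinEmbed_apply, hj]

end Join

section LabeledPoint

variable {ι G : Type*} [AddCommGroup G]

/-- The translation action of `G` on the points of the join of `ι` copies of `G`. -/
def shift (g : G) : (ι → G → ℝ) →ₗ[ℝ] ι → G → ℝ :=
  LinearMap.pi fun i => LinearMap.pi fun k => LinearMap.proj (k - g) ∘ₗ LinearMap.proj i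

lemma shift_apply (g : G) (y : ι → G → ℝ) (i : ι) (k : G) : shift g y i k = y i (k - g) := rfl

lemma shift_single [DecidableEq ι] [DecidableEq G] (g h : G) (i : ι) :
    shift g (Pi.single i (Pi.single h 1)) = Pi.single i (Pi.single (g + h) 1) := by
  ext j k
  rcases eq_or_ne j i with rfl | hj
  · simp [shift_apply, Pi.single_apply, sub_eq_iff_eq_add, add_comm]
  · simp [shift_apply, hj]

variable (ι G) in
/-- A point together with a label in `G`. The label makes the action of `G` free, so that angle
functions of any weight exist. -/
structure LabeledPoint where
  point : ι → G → ℝ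
  label : G

instance : AddAction G (LabeledPoint ι G) where
  vadd g v := ⟨shift g v.point, g + v.label⟩
  zero_vadd v := by
    refine congrArg₂ LabeledPoint.mk ?_ (zero_add _)
    ext i k
    simp [shift_apply]
  add_vadd g h v := by
    refine congrArg₂ LabeledPoint.mk ?_ (add_assoc _ _ _)
    ext i k
    exact congrArg (v.point i) (sub_add_eq_sub_sub _ _ _)

namespace LabeledPoint

lemma point_vadd (g : G) (v : LabeledPoint ι G) : (g +ᵥ v).point = shift g v.point := rfl

lemma label_vadd (g : G) (v : LabeledPoint ι G) : (g +ᵥ v).label = g + v.label := rfl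

/-- The barycenter of a list of labeled points, with the label of the first of them. -/
def barycenter (l : List (LabeledPoint ι G)) : LabeledPoint ι G where
  point := TopologicalTverberg.barycenter (l.map point)
  label := (l.head?.map label).getD 0

lemma barycenter_map_vadd (g : G) {l : List (LabeledPoint ι G)} (hl : l ≠ []) :
    barycenter (l.map (g +ᵥ ·)) = g +ᵥ barycenter l := by
  obtain ⟨v, l, rfl⟩ := List.exists_cons_of_ne_nil hl
  refine congrArg₂ LabeledPoint.mk ?_ rfl
  rw [barycenter, map_barycenter, List.map_map, List.map_map]
  rfl

end LabeledPoint

variable {p e : ℕ} [NeZero p] [Fintype ι]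

lemma exists_orbitJoin_subset_smallSimplices [Nonempty ι] :
    ∃ v : ℕ → LabeledPoint ι (Fin e → ZMod p), ∀ n ≤ Fintype.card ι,
      orbitJoin p e v n ⊆ smallSimplices LabeledPoint.point joinFace 2 := by
  classical
  let idx := Fintype.equivFin ι
  let w (j : ℕ) : ι := idx.symm (Fin.ofNat _ j)
  refine ⟨fun j => ⟨Pi.single (w j) (Pi.single 0 1), 0⟩, ?_⟩
  rintro n hn _ ⟨g, rfl⟩
  have mem_face : ∀ v ∈ (List.range n).reverse.map fun j => g j +ᵥ
      (⟨Pi.single (w j) (Pi.single 0 1), 0⟩ : LabeledPoint ι (Fin e → ZMod p)),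
      v.point ∈ joinFace fun i => g (idx i) := by
    intro v hv
    obtain ⟨j, hj, rfl⟩ := List.mem_map.1 hv
    have idx_w : (idx (w j) : ℕ) = j := by
      simpa [w] using Nat.mod_eq_of_lt ((List.mem_range.1 (List.mem_reverse.1 hj)).trans_le hn)
    have mem := single_mem_joinFace (fun i => g (idx i)) (w j)
    rw [LabeledPoint.point_vadd, shift_single, add_zero]
    simpa only [idx_w] using mem
  refine ⟨⟨_, mem_face⟩, fun u hu v hv => (dist_le_norm_add_norm _ _).trans ?_⟩
  linarith [norm_le_one_of_mem_joinFace (mem_face u hu),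
    norm_le_one_of_mem_joinFace (mem_face v hv)]

theorem exists_isResolutionMap_smallSimplices [Nonempty ι] {ε : ℝ} (hε : 0 < ε) :
    ∃ c : (Fin e → ℤ) → OrderedChain (LabeledPoint ι (Fin e → ZMod p)), IsResolutionMap p c ∧
      ∀ μ, ∑ i, μ i < (Fintype.card ι : ℤ) →
        c μ ∈ Finsupp.supported ℤ ℤ (smallSimplices LabeledPoint.point joinFace ε) := by
  obtain ⟨v, hv⟩ := exists_orbitJoin_subset_smallSimplices (ι := ι) (p := p) (e := e)
  obtain ⟨c, hc, hcv⟩ := exists_isResolutionMap (p := p) (e := e) v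
  have ratio_lt_one : 1 - 1 / (Fintype.card ι : ℝ) < 1 := sub_lt_self _ (by positivity)
  obtain ⟨n, hn⟩ := exists_pow_lt_of_lt_one (half_pos hε) ratio_lt_one
  have c_mem (μ : Fin e → ℤ) (hμ : ∑ i, μ i < (Fintype.card ι : ℤ)) : c μ ∈
      Finsupp.supported ℤ ℤ (smallSimplices LabeledPoint.point joinFace 2) :=
    Finsupp.supported_mono (hv _ (by omega)) (hcv μ)
  have barycenter_vadd (g : Fin e → ZMod p) (l : List (LabeledPoint ι (Fin e → ZMod p)))
      (hl : l ≠ []) : LabeledPoint.barycenter (l.map (g +ᵥ ·)) = g +ᵥ LabeledPoint.barycenter l :=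
    LabeledPoint.barycenter_map_vadd g hl
  obtain ⟨c', hc', hcK⟩ :=
    hc.exists_refinement (π := LabeledPoint.point) (fun _ _ => rfl) barycenter_vadd convex_joinFace
      c_mem n
  exact ⟨c', hc', fun μ hμ =>
    Finsupp.supported_mono (smallSimplices_mono _ _ (by linarith)) (hcK μ hμ)⟩

end LabeledPoint

section BorsukUlam

lemma signedAngle_eq_sub {V : Type*} {s : V → Real.Angle} {z : Real.Angle} {a b : V}
    (ha : |(s a - z).toReal| < Real.pi / 2) (hb : |(s b - z).toReal| < Real.pi / 2) :
    signedAngle s a b = (s b - z).toReal - (s a - z).toReal := by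
  have sub_eq : s b - s a = (((s b - z).toReal - (s a - z).toReal : ℝ) : Real.Angle) := by simp
  rw [abs_lt] at ha hb
  rw [signedAngle, sub_eq, Real.Angle.toReal_coe_eq_self_iff]
  constructor <;> linarith

lemma winding_eq_zero_of_abs_lt {V : Type*} {s : V → Real.Angle} {z : Real.Angle} {a b c : V}
    (ha : |(s a - z).toReal| < Real.pi / 2) (hb : |(s b - z).toReal| < Real.pi / 2)
    (hc : |(s c - z).toReal| < Real.pi / 2) : winding s a b c = 0 := by
  have two_pi_mul := two_pi_mul_winding s a b c
  rw [signedAngle_eq_sub ha hb, signedAngle_eq_sub hb hc, signedAngle_eq_sub ha hc] at two_pi_mul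
  have : 2 * Real.pi * winding s a b c = 0 := two_pi_mul.trans (by ring)
  simpa [Real.pi_ne_zero] using this

lemma ne_zero_of_norm_sub_lt {z w : ℂ} (h : ‖w - z‖ < ‖z‖) : w ≠ 0 := by
  rintro rfl
  simp at h

lemma abs_toReal_arg_sub_arg_lt {z w : ℂ} (h : ‖w - z‖ < ‖z‖) :
    |((w.arg : Real.Angle) - z.arg).toReal| < Real.pi / 2 := by
  have z_ne : z ≠ 0 := norm_pos_iff.1 ((norm_nonneg _).trans_lt h)
  have w_ne := ne_zero_of_norm_sub_lt h
  rw [← Complex.arg_div_coe_angle w_ne z_ne, Complex.arg_coe_angle_toReal_eq_arg,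
    Complex.abs_arg_lt_pi_div_two_iff]
  have norm_lt : ‖w / z - 1‖ < 1 := by
    rwa [div_sub_one z_ne, norm_div, div_lt_one (norm_pos_iff.2 z_ne)]
  have re_lt := (Complex.abs_re_le_norm _).trans_lt norm_lt
  rw [Complex.sub_re, Complex.one_re, abs_lt] at re_lt
  exact Or.inl (by linarith)

lemma exists_norm_sub_lt_of_dist_le {X κ : Type*} [PseudoMetricSpace X] [Finite κ] {K : Set X}
    (hK : IsCompact K) {F : X → κ → ℂ} (hF : ContinuousOn F K) (hne : ∀ y ∈ K, F y ≠ 0) :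
    ∃ ε > 0, ∀ y ∈ K, ∃ k, ∀ z ∈ K, dist z y ≤ ε → ‖F z k - F y k‖ < ‖F y k‖ := by
  have := Fintype.ofFinite κ
  obtain ⟨δ, hδ, hδF⟩ := hK.exists_forall_le' hF.norm fun y hy => norm_pos_iff.2 (hne y hy)
  obtain ⟨ε, hε, hεF⟩ := Metric.uniformContinuousOn_iff_le.1
    (hK.uniformContinuousOn_of_continuous hF) (δ / 2) (half_pos hδ)
  refine ⟨ε, hε, fun y hy => ?_⟩
  obtain ⟨k, hk⟩ : ∃ k, δ ≤ ‖F y k‖ := by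
    by_contra! h
    exact ((pi_norm_lt_iff hδ).2 h).not_ge (hδF y hy)
  refine ⟨k, fun z hz hzy => ?_⟩
  calc ‖F z k - F y k‖ ≤ dist (F z) (F y) := dist_eq_norm (F z k) _ ▸ dist_le_pi_dist (F z) (F y) k
    _ ≤ δ / 2 := hεF z hz y hy hzy
    _ < ‖F y k‖ := by linarith

section Character

variable {p e : ℕ} [NeZero p]

lemma exists_eq_exp_two_pi_div (χ : AddChar (Fin e → ZMod p) ℂ) : ∃ α : Fin e → ℕ,
    ∀ i, α i < p ∧ χ (Pi.single i 1) = Complex.exp ((2 * Real.pi * α i / p : ℝ) * Complex.I) := by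
  have pow_eq_one (i : Fin e) : χ (Pi.single i 1) ^ p = 1 := by
    have smul_eq_zero : p • (Pi.single i 1 : Fin e → ZMod p) = 0 := by ext; simp
    rw [← χ.map_nsmul_eq_pow, smul_eq_zero, χ.map_zero_eq_one]
  choose α hα using fun i =>
    (Complex.isPrimitiveRoot_exp p (NeZero.ne p)).eq_pow_of_pow_eq_one (pow_eq_one i)
  refine ⟨α, fun i => ⟨(hα i).1, ?_⟩⟩
  rw [← (hα i).2, ← Complex.exp_nat_mul]
  congr 1
  push_cast
  ring

lemma addChar_eq_zero_of_single {χ : AddChar (Fin e → ZMod p) ℂ}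
    (h : ∀ i, χ (Pi.single i 1) = 1) : χ = 0 := by
  ext g
  have single_eq (i : Fin e) :
      Pi.single i (g i) = (g i).val • (Pi.single i 1 : Fin e → ZMod p) := by
    rw [← Pi.single_smul]
    simp
  rw [← Finset.univ_sum_single g, AddChar.zero_apply]
  refine Finset.sum_induction _ (fun x => χ x = 1) (fun x y hx hy => ?_) χ.map_zero_eq_one
    fun i _ => ?_
  · rw [χ.map_add_eq_mul, hx, hy, one_mul]
  · rw [single_eq, χ.map_nsmul_eq_pow, h, one_pow]

variable {ι : Type*}

/-- The argument of an equivariant function `φ`, extended to the zeros of `φ` by means of the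
labels. -/
def equivariantAngle {G : Type*} [AddCommGroup G] (χ : AddChar G ℂ) (φ : (ι → G → ℝ) → ℂ)
    (v : LabeledPoint ι G) : Real.Angle :=
  open Classical in (if φ v.point = 0 then χ v.label else φ v.point).arg

lemma equivariantAngle_of_ne_zero {G : Type*} [AddCommGroup G] (χ : AddChar G ℂ)
    {φ : (ι → G → ℝ) → ℂ} {v : LabeledPoint ι G} (h : φ v.point ≠ 0) :
    equivariantAngle χ φ v = (φ v.point).arg := by
  rw [equivariantAngle, if_neg h]

lemma equivariantAngle_vadd {G : Type*} [AddCommGroup G] [Finite G] {χ : AddChar G ℂ}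
    {φ : (ι → G → ℝ) → ℂ} (hφ : ∀ h y, φ (shift h y) = χ h * φ y) (h : G) (v : LabeledPoint ι G) :
    equivariantAngle χ φ (h +ᵥ v) = equivariantAngle χ φ v + (χ h).arg := by
  have χ_ne_zero (g : G) : χ g ≠ 0 := (χ.val_isUnit g).ne_zero
  simp only [equivariantAngle, LabeledPoint.point_vadd, LabeledPoint.label_vadd, hφ, mul_eq_zero,
    χ_ne_zero, false_or, χ.map_add_eq_mul]
  split_ifs with h0
  · rw [Complex.arg_mul_coe_angle (χ_ne_zero _) (χ_ne_zero _), add_comm]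
  · rw [Complex.arg_mul_coe_angle (χ_ne_zero _) h0, add_comm]

lemma exists_hasWeight_equivariantAngle {χ : AddChar (Fin e → ZMod p) ℂ} (hχ : χ ≠ 0) :
    ∃ α : Fin e → ℤ, (∃ i, ¬(p : ℤ) ∣ α i) ∧
      ∀ φ : (ι → (Fin e → ZMod p) → ℝ) → ℂ, (∀ h y, φ (shift h y) = χ h * φ y) →
        HasWeight p α (equivariantAngle χ φ) := by
  obtain ⟨α, hα⟩ := exists_eq_exp_two_pi_div χ
  refine ⟨fun i => α i, ?_, fun φ hφ i v => ?_⟩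
  · by_contra! h
    refine hχ (addChar_eq_zero_of_single fun i => ?_)
    have α_eq_zero := Nat.eq_zero_of_dvd_of_lt (Int.natCast_dvd_natCast.1 (h i)) (hα i).1
    rw [(hα i).2, α_eq_zero]
    simp
  · rw [equivariantAngle_vadd hφ, (hα i).2, Complex.arg_exp_mul_I, Real.Angle.coe_toIocMod,
      Int.cast_natCast]

end Character

variable {p e : ℕ} [Fact p.Prime] {ι κ : Type*} [Fintype ι]

lemma cupWinding_eq_zero_of_mem_smallSimplices {χ : κ → AddChar (Fin e → ZMod p) ℂ}
    {F : (ι → (Fin e → ZMod p) → ℝ) → κ → ℂ} {ε : ℝ} (hε : ∀ y ∈ join ι (Fin e → ZMod p),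
      ∃ k, ∀ z ∈ join ι (Fin e → ZMod p), dist z y ≤ ε → ‖F z k - F y k‖ < ‖F y k‖)
    {L : List κ} (hL : ∀ k, k ∈ L) {l : List (LabeledPoint ι (Fin e → ZMod p))}
    (hl : l ∈ smallSimplices LabeledPoint.point joinFace ε) :
    cupWinding (L.map fun k => equivariantAngle (χ k) fun y => F y k) (Finsupp.single l 1) = 0 := by
  obtain ⟨⟨S, hS⟩, hdist⟩ := hl
  have mem_join (w) (hw : w ∈ l) : w.point ∈ join ι (Fin e → ZMod p) :=
    Set.mem_iUnion.2 ⟨S, hS w hw⟩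
  cases l with
  | nil => exact cupWinding_emptySimplex _
  | cons v l =>
    obtain ⟨k, hk⟩ := hε v.point (mem_join v List.mem_cons_self)
    refine cupWinding_single_eq_zero_of_winding (List.mem_map.2 ⟨k, hL k, rfl⟩) ?_
    have angle_close (w) (hw : w ∈ v :: l) : |(equivariantAngle (χ k) (fun y => F y k) w -
        ((F v.point k).arg : Real.Angle)).toReal| < Real.pi / 2 := by
      have norm_lt := hk w.point (mem_join w hw) (hdist w hw v List.mem_cons_self)
      rw [equivariantAngle_of_ne_zero _ (ne_zero_of_norm_sub_lt norm_lt)]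
      exact abs_toReal_arg_sub_arg_lt norm_lt
    exact fun a ha b hb c hc =>
      winding_eq_zero_of_abs_lt (angle_close a ha) (angle_close b hb) (angle_close c hc)

theorem exists_mem_join_eq_zero [Fintype κ] (hcard : 2 * Fintype.card κ < Fintype.card ι)
    {χ : κ → AddChar (Fin e → ZMod p) ℂ} (hχ : ∀ k, χ k ≠ 0)
    {F : (ι → (Fin e → ZMod p) → ℝ) → κ → ℂ} (hF : ContinuousOn F (join ι (Fin e → ZMod p)))
    (hFχ : ∀ h y k, F (shift h y) k = χ k h * F y k) :
    ∃ y ∈ join ι (Fin e → ZMod p), F y = 0 := by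
  by_contra! hne
  have : Nonempty ι := Fintype.card_pos_iff.1 (by omega)
  have : Nonempty (LabeledPoint ι (Fin e → ZMod p)) := ⟨⟨0, 0⟩⟩
  obtain ⟨ε, hε, hεF⟩ := exists_norm_sub_lt_of_dist_le isCompact_join hF hne
  obtain ⟨c, hc, hcε⟩ := exists_isResolutionMap_smallSimplices (ι := ι) (p := p) (e := e) hε
  choose α hα hweight using fun k => exists_hasWeight_equivariantAngle (ι := ι) (hχ k)
  obtain ⟨μ, hμ, hcup⟩ := hc.exists_cupWinding_ne_zero
    (fun k => hweight k (fun y => F y k) fun h y => hFχ h y k) hα Finset.univ.toList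
  refine hcup (map_eq_zero_of_mem_supported _ (fun l hl =>
    cupWinding_eq_zero_of_mem_smallSimplices hεF (by simp) hl) (hcε μ ?_))
  rw [hμ, Finset.length_toList, Finset.card_univ]
  exact_mod_cast hcard

end BorsukUlam

section Coincidence

lemma eq_of_sum_addChar_mul_eq_zero {G : Type*} [AddCommGroup G] [Fintype G] {u : G → ℂ}
    (hu : ∀ χ : AddChar G ℂ, χ ≠ 0 → ∑ g, χ g * u g = 0) (g h : G) : u g = u h := by
  classical
  have card_mul (h : G) : Fintype.card G * u h = ∑ g, u g :=
    calc Fintype.card G * u h = ∑ g, (∑ χ : AddChar G ℂ, χ (-h + g)) * u g := by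
          simp [AddChar.sum_apply_eq_ite, neg_add_eq_zero]
      _ = ∑ χ : AddChar G ℂ, χ (-h) * ∑ g, χ g * u g := by
          simp only [Finset.sum_mul, Finset.mul_sum, AddChar.map_add_eq_mul, mul_assoc]
          exact Finset.sum_comm
      _ = ∑ g, u g := by
          rw [Finset.sum_eq_single 0 (fun χ _ hχ => by rw [hu χ hχ, mul_zero]) (by simp)]
          simp
  exact mul_left_cancel₀ (by simp) ((card_mul g).trans (card_mul h).symm)

lemma nonneg_of_mem_join {ι G : Type*} [DecidableEq G] [Fintype ι] {y : ι → G → ℝ}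
    (hy : y ∈ join ι G) (i : ι) (g : G) : 0 ≤ y i g := by
  obtain ⟨S, x, hx, rfl⟩ := Set.mem_iUnion.1 hy
  have : 0 ≤ (Pi.single (S i) (x i) : G → ℝ) := Pi.single_nonneg.2 (hx.1 i)
  exact this g

theorem exists_mem_join_forall_eq {p e : ℕ} [Fact p.Prime] {ι J : Type*} [Fintype ι] [Fintype J]
    (hcard : 2 * ((p ^ e - 1) * Fintype.card J) < Fintype.card ι) {Φ : (ι → ℝ) → J → ℂ}
    (hΦ : ContinuousOn Φ (Set.Ici 0)) :
    ∃ y ∈ join ι (Fin e → ZMod p), ∀ g h, Φ (fun i => y i g) = Φ (fun i => y i h) := by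
  classical
  let F (y : ι → (Fin e → ZMod p) → ℝ) (k : {χ : AddChar (Fin e → ZMod p) ℂ // χ ≠ 0} × J) : ℂ :=
    ∑ g, k.1.1 g * Φ (fun i => y i g) k.2
  have F_shift (h y k) : F (shift h y) k = k.1.1 h * F y k := by
    calc F (shift h y) k = ∑ g, k.1.1 (h + g) * Φ (fun i => shift h y i (h + g)) k.2 :=
          (Equiv.sum_comp (Equiv.addLeft h) _).symm
      _ = k.1.1 h * F y k := by
          simp [F, shift_apply, AddChar.map_add_eq_mul, Finset.mul_sum, mul_assoc]
  have F_continuousOn : ContinuousOn F (join ι (Fin e → ZMod p)) := by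
    refine continuousOn_pi.2 fun k => continuousOn_finsetSum _ fun g _ =>
      continuousOn_const.mul ((continuousOn_pi.1 hΦ k.2).comp (by fun_prop) ?_)
    exact fun y hy i => nonneg_of_mem_join hy i g
  have card_lt : 2 * Fintype.card ({χ : AddChar (Fin e → ZMod p) ℂ // χ ≠ 0} × J) <
      Fintype.card ι := by
    simpa [Fintype.card_prod, Fintype.card_subtype_compl, AddChar.card_eq] using hcard
  obtain ⟨y, hy, hFy⟩ := exists_mem_join_eq_zero card_lt (χ := fun k => k.1.1) (fun k => k.1.2)
    F_continuousOn F_shift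
  exact ⟨y, hy, fun g h => funext fun j =>
    eq_of_sum_addChar_mul_eq_zero (u := fun g => Φ (fun i => y i g) j)
      (fun χ hχ => congrFun hFy (⟨χ, hχ⟩, j)) g h⟩

end Coincidence

section Homogenize

variable {A J : Type*} [Fintype A]

/-- The extension of a function `f` on the simplex to the orthant `Set.Ici 0` which is homogeneous
of degree one, together with the sum of the coordinates (the component `none`). It vanishes at `0`.
-/
def homogenize (f : (A → ℝ) → J → ℝ) (x : A → ℝ) : Option J → ℝ
  | none => ∑ a, x a
  | some j => (∑ a, x a) * f ((∑ a, x a)⁻¹ • x) j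

lemma inv_sum_smul_mem_stdSimplex {x : A → ℝ} (hx : 0 ≤ x) (hsum : ∑ a, x a ≠ 0) :
    (∑ a, x a)⁻¹ • x ∈ stdSimplex ℝ A := by
  refine ⟨fun a => mul_nonneg (inv_nonneg.2 (Finset.sum_nonneg fun a _ => hx a)) (hx a), ?_⟩
  simp [← Finset.mul_sum, hsum]

lemma norm_homogenize_some_le {f : (A → ℝ) → J → ℝ} {b : ℝ} {j : J}
    (hb : ∀ x ∈ stdSimplex ℝ A, ‖f x j‖ ≤ b) {x : A → ℝ} (hx : 0 ≤ x) :
    ‖homogenize f x (some j)‖ ≤ (∑ a, x a) * b := by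
  have sum_nonneg : 0 ≤ ∑ a, x a := Finset.sum_nonneg fun a _ => hx a
  rw [homogenize, norm_mul, Real.norm_of_nonneg sum_nonneg]
  rcases sum_nonneg.eq_or_lt with h0 | hpos
  · simp [← h0]
  · gcongr
    exact hb _ (inv_sum_smul_mem_stdSimplex hx hpos.ne')

lemma continuousOn_homogenize {f : (A → ℝ) → J → ℝ} (hf : ContinuousOn f (stdSimplex ℝ A)) :
    ContinuousOn (homogenize f) (Set.Ici 0) := by
  refine continuousOn_pi.2 fun o => ?_
  have sum_continuous : Continuous fun x : A → ℝ => ∑ a, x a := by fun_prop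
  rcases o with - | j
  · exact sum_continuous.continuousOn
  have fj_continuousOn := continuousOn_pi.1 hf j
  obtain ⟨b, hb⟩ := (isCompact_stdSimplex ℝ A).exists_bound_of_continuousOn fj_continuousOn
  have sum_ne_zero : ContinuousOn (fun x => homogenize f x (some j))
      (Set.Ici 0 ∩ {x | ∑ a, x a ≠ 0}) :=
    sum_continuous.continuousOn.mul <| fj_continuousOn.comp
      ((sum_continuous.continuousOn.inv₀ fun x hx => hx.2).smul continuousOn_id)
      fun x hx => inv_sum_smul_mem_stdSimplex hx.1 hx.2
  intro x hx
  by_cases hsum : ∑ a, x a = 0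
  · have bound_tendsto : Filter.Tendsto (fun y : A → ℝ => (∑ a, y a) * b)
        (nhdsWithin x (Set.Ici 0)) (nhds 0) := by
      have := (sum_continuous.mul_const b).continuousWithinAt (s := Set.Ici 0) (x := x)
      rwa [ContinuousWithinAt, hsum, zero_mul] at this
    rw [ContinuousWithinAt, homogenize, hsum, zero_mul]
    exact squeeze_zero_norm'
      (eventually_mem_nhdsWithin.mono fun y hy => norm_homogenize_some_le hb hy) bound_tendsto
  · exact (sum_ne_zero x ⟨hx, hsum⟩).mono_of_mem_nhdsWithin <| Filter.inter_mem
      self_mem_nhdsWithin (sum_continuous.continuousWithinAt.eventually_ne hsum)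

lemma eq_of_homogenize_eq {f : (A → ℝ) → J → ℝ} {x y : A → ℝ} (hx : ∑ a, x a ≠ 0)
    (h : homogenize f x = homogenize f y) :
    f ((∑ a, x a)⁻¹ • x) = f ((∑ a, y a)⁻¹ • y) := by
  ext j
  have sum_eq : ∑ a, x a = ∑ a, y a := congrFun h none
  have mul_eq : (∑ a, x a) * f ((∑ a, x a)⁻¹ • x) j = (∑ a, y a) * f ((∑ a, y a)⁻¹ • y) j :=
    congrFun h (some j)
  rw [← sum_eq] at mul_eq ⊢
  exact mul_left_cancel₀ hx mul_eq

end Homogenize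

section Tverberg

lemma pairwise_disjoint_support_of_mem_join {ι G : Type*} [Fintype ι] [DecidableEq G]
    {y : ι → G → ℝ} (hy : y ∈ join ι G) :
    Pairwise fun g h => Disjoint (Function.support fun i => y i g)
      (Function.support fun i => y i h) := by
  obtain ⟨S, x, -, rfl⟩ := Set.mem_iUnion.1 hy
  have eq_of_ne_zero (i : ι) (g : G) (h : joinEmbed S x i g ≠ 0) : g = S i := by
    by_contra hg
    exact h (by simp [joinEmbed_apply, hg])
  exact fun g h hgh => Set.disjoint_left.2 fun i hi hi' =>
    hgh ((eq_of_ne_zero i g hi).trans (eq_of_ne_zero i h hi').symm)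

lemma sum_sum_eq_one_of_mem_join {ι G : Type*} [Fintype ι] [Fintype G] [DecidableEq G]
    {y : ι → G → ℝ} (hy : y ∈ join ι G) : ∑ i, ∑ g, y i g = 1 := by
  obtain ⟨S, x, hx, rfl⟩ := Set.mem_iUnion.1 hy
  simpa [joinEmbed_apply] using hx.2

variable {p e : ℕ} [Fact p.Prime] {A J : Type*} [Fintype A] [Fintype J]

/-- Two real test functions are combined into a complex one by doubling the vertex set. -/
lemma exists_mem_join_homogenize_eq
    (hcard : (p ^ e - 1) * (Fintype.card J + 1) < Fintype.card A)
    {f : (A → ℝ) → J → ℝ} (hf : ContinuousOn f (stdSimplex ℝ A)) :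
    ∃ y ∈ join (Bool × A) (Fin e → ZMod p), ∀ b g h,
      homogenize f (fun a => y (b, a) g) = homogenize f (fun a => y (b, a) h) := by
  let Φ (x : Bool × A → ℝ) (o : Option J) : ℂ :=
    Complex.equivRealProdCLM.symm (homogenize f (fun a => x (false, a)) o,
      homogenize f (fun a => x (true, a)) o)
  have half_continuousOn (b : Bool) :
      ContinuousOn (fun x : Bool × A → ℝ => homogenize f fun a => x (b, a)) (Set.Ici 0) :=
    (continuousOn_homogenize hf).comp (by fun_prop) fun x hx a => hx (b, a)
  have Φ_continuousOn : ContinuousOn Φ (Set.Ici 0) := continuousOn_pi.2 fun o =>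
    Complex.equivRealProdCLM.symm.continuous.comp_continuousOn <|
      (continuousOn_pi.1 (half_continuousOn false) o).prodMk
        (continuousOn_pi.1 (half_continuousOn true) o)
  obtain ⟨y, hy, hΦ⟩ := exists_mem_join_forall_eq (p := p) (e := e) (by simpa) Φ_continuousOn
  refine ⟨y, hy, fun b g h => funext fun o => ?_⟩
  have pair_eq := Complex.equivRealProdCLM.symm.injective (congrFun (hΦ g h) o)
  cases b
  exacts [congrArg Prod.fst pair_eq, congrArg Prod.snd pair_eq]

theorem topological_tverberg (hcard : (p ^ e - 1) * (Fintype.card J + 1) < Fintype.card A)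
    {f : (A → ℝ) → J → ℝ} (hf : ContinuousOn f (stdSimplex ℝ A)) :
    ∃ z : (Fin e → ZMod p) → A → ℝ, (∀ g, z g ∈ stdSimplex ℝ A) ∧
      (Pairwise fun g h => Disjoint (Function.support (z g)) (Function.support (z h))) ∧
      ∀ g h, f (z g) = f (z h) := by
  obtain ⟨y, hy, homogenize_eq⟩ := exists_mem_join_homogenize_eq hcard hf
  obtain ⟨⟨b, a⟩, -, hba⟩ := Finset.exists_ne_zero_of_sum_ne_zero
    ((sum_sum_eq_one_of_mem_join hy).trans_ne one_ne_zero)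
  obtain ⟨h, -, hyh⟩ := Finset.exists_ne_zero_of_sum_ne_zero hba
  let x (g : Fin e → ZMod p) (a : A) : ℝ := y (b, a) g
  have x_nonneg (g) : 0 ≤ x g := fun a => nonneg_of_mem_join hy _ _
  have sum_ne_zero (g) : ∑ a, x g a ≠ 0 := by
    have sum_eq : ∑ a, x g a = ∑ a, x h a := congrFun (homogenize_eq b g h) none
    rw [sum_eq]
    exact (Finset.sum_pos' (fun a _ => x_nonneg h a)
      ⟨a, Finset.mem_univ a, (x_nonneg h a).lt_of_ne' hyh⟩).ne'
  refine ⟨fun g => (∑ a, x g a)⁻¹ • x g,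
    fun g => inv_sum_smul_mem_stdSimplex (x_nonneg g) (sum_ne_zero g), fun g k hgk => ?_,
    fun g k => eq_of_homogenize_eq (sum_ne_zero g) (homogenize_eq b g k)⟩
  have disjoint := (pairwise_disjoint_support_of_mem_join hy hgk).preimage (Prod.mk b)
  exact disjoint.mono (Function.support_const_smul_subset _ _)
    (Function.support_const_smul_subset _ _)

end Tverberg

section ConstraintMethod

lemma sum_offDiag_mul_eq_zero_iff {A : Type*} {x : A → ℝ} (hx : 0 ≤ x)
    (C : Finset A) :
    ∑ q ∈ C.offDiag, x q.1 * x q.2 = 0 ↔ (C.filter fun a => x a ≠ 0).card ≤ 1 := by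
  classical
  rw [Finset.sum_eq_zero_iff_of_nonneg fun q _ => mul_nonneg (hx q.1) (hx q.2),
    Finset.card_le_one]
  simp only [Finset.mem_offDiag, Prod.forall, mul_eq_zero, Finset.mem_filter]
  grind

lemma exists_card_filter_le_one {A G : Type*} [Fintype G] {z : G → A → ℝ}
    (hz : Pairwise fun g h => Disjoint (Function.support (z g)) (Function.support (z h)))
    {C : Finset A} (hC : C.card < 2 * Fintype.card G) :
    ∃ g, (C.filter fun a => z g a ≠ 0).card ≤ 1 := by
  classical
  by_contra! two_le
  refine hC.not_ge ?_
  calc 2 * Fintype.card G ≤ ∑ g, (C.filter fun a => z g a ≠ 0).card := by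
        rw [mul_comm, ← smul_eq_mul]
        exact Finset.card_nsmul_le_sum Finset.univ _ 2 fun g _ => two_le g
    _ = (Finset.univ.biUnion fun g => C.filter fun a => z g a ≠ 0).card := by
        refine (Finset.card_biUnion fun g _ h _ hgh => ?_).symm
        exact Finset.disjoint_filter.2 fun a _ hg hh => Set.disjoint_left.1 (hz hgh) hg hh
    _ ≤ C.card := Finset.card_le_card (Finset.biUnion_subset.2 fun g _ => Finset.filter_subset _ _)

theorem topological_tverberg_colored {p e : ℕ} [Fact p.Prime] {A J κ : Type*} [Fintype A]
    [Fintype J] [Fintype κ]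
    (hcard : (p ^ e - 1) * (Fintype.card J + Fintype.card κ + 1) < Fintype.card A)
    {C : κ → Finset A} (hC : ∀ i, (C i).card < 2 * p ^ e)
    {f : (A → ℝ) → J → ℝ} (hf : ContinuousOn f (stdSimplex ℝ A)) :
    ∃ z : (Fin e → ZMod p) → A → ℝ, (∀ g, z g ∈ stdSimplex ℝ A) ∧
      (Pairwise fun g h => Disjoint (Function.support (z g)) (Function.support (z h))) ∧
      (∀ g i, ((C i).filter fun a => z g a ≠ 0).card ≤ 1) ∧ ∀ g h, f (z g) = f (z h) := by
  classical
  let F (x : A → ℝ) : J ⊕ κ → ℝ := Sum.elim (f x) fun i => ∑ q ∈ (C i).offDiag, x q.1 * x q.2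
  have F_continuousOn : ContinuousOn F (stdSimplex ℝ A) := by
    refine continuousOn_pi.2 (Sum.rec (continuousOn_pi.1 hf) fun i => ?_)
    exact Continuous.continuousOn (by dsimp [F]; fun_prop)
  obtain ⟨z, z_mem, z_disjoint, hF⟩ :=
    topological_tverberg (by rwa [Fintype.card_sum]) F_continuousOn
  refine ⟨z, z_mem, z_disjoint, fun g i => ?_, fun g h => funext fun j =>
    congrFun (hF g h) (Sum.inl j)⟩
  obtain ⟨h, hh⟩ := exists_card_filter_le_one z_disjoint (C := C i) (by simpa using hC i)
  have penalty_eq : ∑ q ∈ (C i).offDiag, z g q.1 * z g q.2 =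
      ∑ q ∈ (C i).offDiag, z h q.1 * z h q.2 :=
    congrFun (hF g h) (Sum.inr i)
  rwa [← sum_offDiag_mul_eq_zero_iff (z_mem g).1, penalty_eq,
    sum_offDiag_mul_eq_zero_iff (z_mem h).1]

end ConstraintMethod

end TopologicalTverberg

theorem topological_weak_colored_tverberg_general (d p ee : ℕ) (hp : p.Prime) (r N : ℕ)
    (hr : r = p ^ ee) {κ : Type*} [Fintype κ] (hN : (r - 1) * (d + Fintype.card κ + 1) ≤ N)
    (C : κ → Finset (Fin (N + 1))) (hCcard : ∀ i, (C i).card ≤ 2 * r - 1)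
    (f : EuclideanSpace ℝ (Fin (N + 1)) → EuclideanSpace ℝ (Fin d))
    (hf : ContinuousOn f (stdSimp N)) :
    ∃ σ : Fin r → Finset (Fin (N + 1)),
      (∀ j, (σ j).Nonempty) ∧
      (∀ j j', j ≠ j' → Disjoint (σ j) (σ j')) ∧
      (∀ j i, (σ j ∩ C i).card ≤ 1) ∧
      (⋂ j, f '' simpFace N (σ j)).Nonempty := by
  subst hr
  have : Fact p.Prime := ⟨hp⟩
  have r_pos : 0 < p ^ ee := pow_pos hp.pos ee
  let f' (x : Fin (N + 1) → ℝ) : Fin d → ℝ := (f (WithLp.toLp 2 x)).ofLp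
  have f'_continuousOn : ContinuousOn f' (stdSimplex ℝ (Fin (N + 1))) :=
    (PiLp.continuous_ofLp 2 _).comp_continuousOn <|
      hf.comp (PiLp.continuous_toLp 2 _).continuousOn fun x hx => hx
  obtain ⟨z, z_mem, z_disjoint, z_rainbow, f_eq⟩ :=
    TopologicalTverberg.topological_tverberg_colored (p := p) (e := ee) (by simpa using by omega)
      (fun i => (hCcard i).trans_lt (by omega)) f'_continuousOn
  let idx : Fin (p ^ ee) ≃ (Fin ee → ZMod p) := Fintype.equivOfCardEq (by simp)
  let σ (j : Fin (p ^ ee)) : Finset (Fin (N + 1)) := {a | z (idx j) a ≠ 0}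
  have mem_face (j) : WithLp.toLp 2 (z (idx j)) ∈ simpFace N (σ j) :=
    ⟨z_mem (idx j), fun a ha => by simpa [σ] using ha⟩
  refine ⟨σ, fun j => ?_, fun j j' hj => ?_, fun j i => ?_, f (WithLp.toLp 2 (z 0)),
    Set.mem_iInter.2 fun j => ⟨_, mem_face j, WithLp.ofLp_injective 2 (f_eq _ _)⟩⟩
  · obtain ⟨a, -, ha⟩ :=
      Finset.exists_ne_zero_of_sum_ne_zero ((z_mem (idx j)).2.trans_ne one_ne_zero)
    exact ⟨a, by simpa [σ] using ha⟩
  · exact Finset.disjoint_filter.2 fun a _ ha ha' =>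
      Set.disjoint_left.1 (z_disjoint (idx.injective.ne hj)) ha ha'
  · rw [Finset.inter_comm, ← Finset.filter_mem_eq_inter]
    simpa [σ] using z_rainbow (idx j) i

/-- The topological weak colored Tverberg theorem. -/
theorem topological_weak_colored_tverberg
    (d p ee : ℕ) (hp : p.Prime) (hd : 1 ≤ d)
    (r N : ℕ) (hr : r = p ^ ee)
    (hN : N = (r - 1) * (2 * d + 2))
    (C : Fin (d + 1) → Finset (Fin (N + 1)))
    (hCdisj : ∀ i i' : Fin (d + 1), i ≠ i' → Disjoint (C i) (C i'))
    (hCcover : ∀ v : Fin (N + 1), ∃ i, v ∈ C i)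
    (hCcard : ∀ i, (C i).card ≤ 2 * r - 1)
    (f : EuclideanSpace ℝ (Fin (N + 1)) → EuclideanSpace ℝ (Fin d))
    (hf : ContinuousOn f (stdSimp N)) :
    ∃ σ : Fin r → Finset (Fin (N + 1)),
      (∀ j, (σ j).Nonempty) ∧
      (∀ j j', j ≠ j' → Disjoint (σ j) (σ j')) ∧
      (∀ j, ∀ i : Fin (d + 1), (σ j ∩ C i).card ≤ 1) ∧
      (⋂ j, f '' simpFace N (σ j)).Nonempty :=
  topological_weak_colored_tverberg_general d p ee hp r N hr
    (by rw [hN, Fintype.card_fin]; exact (congrArg _ (by ring)).le) C hCcard f hf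
end
end

section
/- Let r ≥ 1, d ≥ 1 and m ≥ 0 be integers, set k = ⌈((r−1)/r)·d⌉, and let V be a finite set with |V| = (r−1)(d+2−m)+1. Then for every family S_1, …, S_r of pairwise disjoint subsets of V there is at least one index j with |S_j| ≤ k+1. Equivalently, among any r pairwise disjoint faces of the simplex Δ_N with N = (r−1)(d+2−m), at least one face lies in the k-skeleton of Δ_N; in particular, the k-skeleton of Δ_N is Tverberg unavoidable with respect to every continuous map Δ_N → ℝ^d. -/
/-!
If all `r` sets had at least `k + 2` elements, disjointness would force `r (k + 2) ≤ |V|`. But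
`r k ≥ (r - 1) d` by the choice of `k`, and therefore
`r (k + 2) ≥ (r - 1) d + 2 r = (r - 1) (d + 2) + 2 > |V|`.
-/

open scoped BigOperators

theorem exists_card_lt_of_pairwiseDisjoint {ι α : Type*} {s : Finset ι} {S : ι → Finset α}
    {V : Finset α} {n : ℕ} (hSV : ∀ j ∈ s, S j ⊆ V)
    (hS : (s : Set ι).PairwiseDisjoint S) (hV : V.card < s.card * n) :
    ∃ j ∈ s, (S j).card < n := by
  classical
  apply Finset.exists_lt_of_sum_lt
  calc ∑ j ∈ s, (S j).card = (s.biUnion S).card := (Finset.card_biUnion hS).symm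
    _ ≤ V.card := Finset.card_le_card (Finset.biUnion_subset.2 hSV)
    _ < s.card * n := hV
    _ = ∑ _j ∈ s, n := (Finset.sum_const_nat fun _ _ => rfl).symm

theorem le_mul_natCeil_div {K : Type*} [Semifield K] [LinearOrder K] [IsStrictOrderedRing K]
    [FloorSemiring K] (a : K) {b : K} (hb : 0 < b) : a ≤ b * ⌈a / b⌉₊ :=
  (div_le_iff₀' hb).1 (Nat.le_ceil _)

theorem sub_one_mul_add_one_lt_mul_add_two {R : Type*} [CommRing R] [LinearOrder R]
    [IsStrictOrderedRing R] {r d m k : R} (hr : 1 ≤ r) (hm : 0 ≤ m)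
    (hk : (r - 1) * d ≤ r * k) : (r - 1) * (d + 2 - m) + 1 < r * (k + 2) :=
  calc (r - 1) * (d + 2 - m) + 1
      ≤ (r - 1) * (d + 2) + 1 := by
        gcongr
        exact sub_le_self _ hm
    _ = (r - 1) * d + 2 * r - 1 := by ring
    _ < (r - 1) * d + 2 * r := sub_one_lt _
    _ ≤ r * k + 2 * r := by gcongr
    _ = r * (k + 2) := by ring

/-- The pigeonhole lemma behind Tverberg unavoidability of the `k`-skeleton:
among `r` pairwise disjoint subsets of a set `V` with `|V| = (r−1)(d+2−m)+1`,
at least one has at most `k+1 = ⌈((r−1)/r)·d⌉ + 1` elements. -/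
theorem skeleton_unavoidable_pigeonhole
    {α : Type*} [DecidableEq α]
    (r d m : ℕ) (hr : 1 ≤ r) (hd : 1 ≤ d)
    (k : ℕ) (hk : k = ⌈(((r : ℚ) - 1) / (r : ℚ)) * d⌉₊)
    (V : Finset α) (hV : (V.card : ℤ) = ((r : ℤ) - 1) * ((d : ℤ) + 2 - (m : ℤ)) + 1)
    (S : Fin r → Finset α) (hSV : ∀ j, S j ⊆ V)
    (hdisj : ∀ j j', j ≠ j' → Disjoint (S j) (S j')) :
    ∃ j, (S j).card ≤ k + 1 := by
  have hrk : ((r : ℚ) - 1) * d ≤ r * k := by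
    rw [hk, div_mul_eq_mul_div]
    exact le_mul_natCeil_div _ (by exact_mod_cast hr)
  have hcard : V.card < r * (k + 2) := by
    zify
    rw [hV]
    exact sub_one_mul_add_one_lt_mul_add_two (by exact_mod_cast hr) m.cast_nonneg
      (by exact_mod_cast hrk)
  obtain ⟨j, -, hj⟩ := exists_card_lt_of_pairwiseDisjoint (s := Finset.univ) (n := k + 2)
    (fun j _ => hSV j) (fun j _ j' _ hne => hdisj j j' hne) (by simpa using hcard)
  exact ⟨j, Nat.le_of_lt_succ hj⟩
end

section
/- Let r ≥ 1, d ≥ 1 and m ≥ 0 be integers, set N = (r−1)(d+2−m) and k = ⌈((r−1)/r)·d⌉. Let σ_1, …, σ_r be pairwise disjoint faces of Δ_N, and for each i let x_i be a point in the relative interior of σ_i (i.e., supp(x_i) equals the vertex set of σ_i). If the Euclidean distances in ℝ^{N+1} from the points x_i to the geometric k-skeleton of Δ_N are all equal, dist(x_1, sk_k(Δ_N)) = ⋯ = dist(x_r, sk_k(Δ_N)), then these common distances are 0 and all the faces σ_1, …, σ_r lie in the k-skeleton of Δ_N. -/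
/-!
If every face had at least `k + 2` vertices, disjointness would give `r (k + 2) ≤ N + 1`; but
`r k ≥ (r - 1) d`, so `r (k + 2) ≥ (r - 1) (d + 2) + 2 > N + 1`. Hence some face lies in the
skeleton, the distance from its point is `0`, and so is the common distance. As the skeleton is
closed, it contains all the points, and a point of the simplex lies in the `k`-skeleton exactly when
its support has at most `k + 1` vertices.
-/

open scoped BigOperators Classical

noncomputable section

/-- The support of a point of the simplex, as a finite set of vertices. -/
def suppF {n : ℕ} (x : EuclideanSpace ℝ (Fin n)) : Finset (Fin n) :=
  Finset.univ.filter fun i => x i ≠ 0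

/-- The geometric `k`-skeleton of the standard `N`-simplex: the union of all faces
with at most `k+1` vertices. -/
def skel (N k : ℕ) : Set (EuclideanSpace ℝ (Fin (N + 1))) :=
  ⋃ S ∈ {S : Finset (Fin (N + 1)) | S.Nonempty ∧ S.card ≤ k + 1}, simpFace N S

section Skeleton

variable {N k : ℕ} {S : Finset (Fin (N + 1))} {x : EuclideanSpace ℝ (Fin (N + 1))}

theorem mem_suppF {n : ℕ} {y : EuclideanSpace ℝ (Fin n)} {i : Fin n} : i ∈ suppF y ↔ y i ≠ 0 := by
  simp [suppF]

theorem suppF_nonempty (hx : x ∈ stdSimp N) : (suppF x).Nonempty := by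
  obtain ⟨i, -, hi⟩ : ∃ i ∈ Finset.univ, x i ≠ 0 :=
    Finset.exists_ne_zero_of_sum_ne_zero (hx.2.trans_ne one_ne_zero)
  exact ⟨i, mem_suppF.2 hi⟩

theorem mem_simpFace_iff : x ∈ simpFace N S ↔ x ∈ stdSimp N ∧ suppF x ⊆ S := by
  simp only [simpFace, Set.mem_ofPred_eq, Finset.subset_iff, mem_suppF]

theorem mem_skel_iff : x ∈ skel N k ↔ x ∈ stdSimp N ∧ (suppF x).card ≤ k + 1 := by
  simp only [skel, Set.mem_iUnion, Set.mem_ofPred_eq, exists_prop, mem_simpFace_iff]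
  constructor
  · rintro ⟨S, ⟨-, hS⟩, hx, hxS⟩
    exact ⟨hx, (Finset.card_le_card hxS).trans hS⟩
  · rintro ⟨hx, hcard⟩
    exact ⟨suppF x, ⟨suppF_nonempty hx, hcard⟩, hx, subset_rfl⟩

theorem isClosed_stdSimp (N : ℕ) : IsClosed (stdSimp N) := by
  simp only [stdSimp, Set.ofPred_and, Set.ofPred_forall]
  exact (isClosed_iInter fun i => isClosed_le (by fun_prop) (by fun_prop)).inter
    (isClosed_eq (by fun_prop) (by fun_prop))

theorem isClosed_simpFace (N : ℕ) (S : Finset (Fin (N + 1))) : IsClosed (simpFace N S) := by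
  have hface : simpFace N S = stdSimp N ∩ ⋂ i, ⋂ (_ : i ∉ S), {x | x i = 0} := by
    ext x
    simp only [simpFace, Set.mem_ofPred_eq, Set.mem_inter_iff, Set.mem_iInter, not_imp_comm, ne_eq]
  rw [hface]
  exact (isClosed_stdSimp N).inter <| isClosed_iInter fun i => isClosed_iInter fun _ =>
    isClosed_eq (by fun_prop) (by fun_prop)

theorem isClosed_skel (N k : ℕ) : IsClosed (skel N k) :=
  (Set.toFinite _).isClosed_biUnion fun S _ => isClosed_simpFace N S

end Skeleton

theorem exists_card_le_of_pairwise_disjoint {ι α : Type*} [Fintype ι] [Fintype α]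
    {s : ι → Finset α} {n : ℕ} (hs : Pairwise (Function.onFun Disjoint s))
    (hn : Fintype.card α < Fintype.card ι * (n + 1)) : ∃ i, (s i).card ≤ n := by
  by_contra! hcard
  refine hn.not_ge ?_
  calc Fintype.card ι * (n + 1) = ∑ _i : ι, (n + 1) := by simp
    _ ≤ ∑ i, (s i).card := Finset.sum_le_sum fun i _ => hcard i
    _ = (Finset.univ.biUnion s).card := (Finset.card_biUnion (hs.set_pairwise _)).symm
    _ ≤ Fintype.card α := Finset.card_le_univ _

theorem mul_le_mul_natCeil_div_mul {K : Type*} [Field K] [LinearOrder K] [IsStrictOrderedRing K]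
    [FloorSemiring K] (a c : K) {b : K} (hb : 0 < b) : a * c ≤ b * ⌈a / b * c⌉₊ := by
  calc a * c = b * (a / b * c) := by field_simp
    _ ≤ b * ⌈a / b * c⌉₊ := by gcongr; exact Nat.le_ceil _

theorem add_one_lt_mul_add_two_of_eq_natCeil {r d m N k : ℕ} (hr : 1 ≤ r)
    (hN : (N : ℤ) = ((r : ℤ) - 1) * ((d : ℤ) + 2 - (m : ℤ)))
    (hk : k = ⌈(((r : ℚ) - 1) / (r : ℚ)) * d⌉₊) : N + 1 < r * (k + 2) := by
  have hrk_rat : ((r : ℚ) - 1) * d ≤ r * k :=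
    hk ▸ mul_le_mul_natCeil_div_mul _ _ (by exact_mod_cast hr)
  have hrk : ((r : ℤ) - 1) * d ≤ r * k := by exact_mod_cast hrk_rat
  have hm : 0 ≤ ((r : ℤ) - 1) * m := mul_nonneg (by lia) (by lia)
  zify
  calc (N : ℤ) + 1 = ((r : ℤ) - 1) * d - (r - 1) * m + 2 * r - 1 := by rw [hN]; ring
    _ < r * k + 2 * r := by linarith
    _ = r * (k + 2) := by ring

theorem equal_distances_to_skeleton_vanish_general {ι : Type*} [Fintype ι] {N k : ℕ}
    (hNk : N + 1 < Fintype.card ι * (k + 2)) {σ : ι → Finset (Fin (N + 1))}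
    (hdisj : Pairwise (Function.onFun Disjoint σ)) {x : ι → EuclideanSpace ℝ (Fin (N + 1))}
    (hx : ∀ i, x i ∈ stdSimp N) (hsupp : ∀ i, suppF (x i) = σ i)
    (hdist : ∀ i i', Metric.infDist (x i) (skel N k) = Metric.infDist (x i') (skel N k)) :
    (∀ i, Metric.infDist (x i) (skel N k) = 0) ∧ (∀ i, (σ i).card ≤ k + 1) := by
  have hmem (i : ι) : x i ∈ skel N k ↔ (σ i).card ≤ k + 1 := by simp [mem_skel_iff, hx, hsupp]
  obtain ⟨i₀, hcard⟩ : ∃ i, (σ i).card ≤ k + 1 :=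
    exists_card_le_of_pairwise_disjoint hdisj (by simpa using hNk)
  have hi₀ : x i₀ ∈ skel N k := (hmem i₀).2 hcard
  have hzero (i : ι) : Metric.infDist (x i) (skel N k) = 0 :=
    (hdist i i₀).trans (Metric.infDist_zero_of_mem hi₀)
  have hskel (i : ι) : x i ∈ skel N k :=
    ((isClosed_skel N k).mem_iff_infDist_zero ⟨_, hi₀⟩).2 (hzero i)
  exact ⟨hzero, fun i => (hmem i).1 (hskel i)⟩

/-- If points in the relative interiors of `r` pairwise disjoint faces of `Δ_N`,
`N = (r−1)(d+2−m)`, are all at the same distance from the `k`-skeleton,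
`k = ⌈((r−1)/r)·d⌉, then these distances vanish and all the faces lie in the skeleton. -/
theorem equal_distances_to_skeleton_vanish
    (r d m N k : ℕ) (hr : 1 ≤ r) (hd : 1 ≤ d)
    (hN : (N : ℤ) = ((r : ℤ) - 1) * ((d : ℤ) + 2 - (m : ℤ)))
    (hk : k = ⌈(((r : ℚ) - 1) / (r : ℚ)) * d⌉₊)
    (σ : Fin r → Finset (Fin (N + 1)))
    (hne : ∀ i, (σ i).Nonempty)
    (hdisj : ∀ i i', i ≠ i' → Disjoint (σ i) (σ i'))
    (x : Fin r → EuclideanSpace ℝ (Fin (N + 1)))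
    (hx : ∀ i, x i ∈ stdSimp N)
    (hsupp : ∀ i, suppF (x i) = σ i)
    (hdist : ∀ i i', Metric.infDist (x i) (skel N k) = Metric.infDist (x i') (skel N k)) :
    (∀ i, Metric.infDist (x i) (skel N k) = 0) ∧ (∀ i, (σ i).card ≤ k + 1) := by
  have hNk : N + 1 < r * (k + 2) := add_one_lt_mul_add_two_of_eq_natCeil hr hN hk
  exact equal_distances_to_skeleton_vanish_general (by simpa using hNk) hdisj hx hsupp hdist
end
end
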